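/- arXiv:1812.11313 — 3 statements merged into one kernel-verified Lean document; each statement's English description precedes it below -/
import Mathlib

section
/- For every prime p, every cyclic p-group (a finite cyclic group of prime-power order p^k) is separable with respect to the class 𝒦_A of finite abelian groups; that is, every S-ring over a cyclic p-group is separable with respect to 𝒦_A. -/
/-!
An S-ring is treated as a colouring of the group by its basic sets, and an algebraic isomorphism
`φ` as an identification of the colours of two such colourings `c` on `G` and `d` on `H`
(`SchurColor.Col`). The goal is a bijection `f : G → H` with `c (a * b⁻¹) = d (f a * (f b)⁻¹)` for
all `a` and `b`: it induces `φ`. Here `G` is a cyclic `p`-group, and `H` is only abelian.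

A power map whose exponent is prime to the order of the group maps classes to classes, compatibly
with `φ` (`Col.mult`). Together with a count of the overlaps of a class with its translates this
gives the structure theorem `Col.structure_thm`: if `⟨u⟩` is closed (a union of classes), the class
of `u` either is `⟨u⟩ \ R`, where `R` is its radical, or consists of generators of `⟨u⟩`.

For a class of generators of `⟨u⟩` one passes to the quotient by its radical. When the radical is
trivial, the class contains at most one element from each coset of `⟨u ^ p⟩`, or else `p = 2` and
the class is `{u, u ^ ε}` with `ε ≡ 3` modulo `4`. In both cases `u ^ n ↦ u' ^ n` preserves colours
for each `u'` in `H` with the colour of `u` (`Free.lift`, `Col.good_rad`); the point is that `u'`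
need not be known to generate a subgroup of the right kind beforehand.

The map `f` is constructed on the closed subgroups `⟨u⟩` by induction on the order of `u`, with
a prescribed behaviour `u ^ n ↦ u' ^ n` modulo the subgroup of `H` corresponding to a closed
subgroup `L` (`Col.lifts`). If the class of `u` is `⟨u⟩ \ R`, a map on `R` is extended coset by
coset; if it consists of generators, a map on `⟨u ^ p⟩` is extended along `u ^ i ↦ u' ^ i`, which
works because the classes outside `⟨u ^ p⟩` are unions of cosets of the radical (`Col.glue`,
`Col.glue_wreath`).
-/

open scoped Pointwise

namespace SRingPaper

/-- The number of representations of `z` as `x * y` with `x ∈ X`, `y ∈ Y`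
(the structure constant `c^Z_{X,Y}` evaluated at `z ∈ Z`). -/
noncomputable def structConst {G : Type*} [Group G] (X Y : Set G) (z : G) : ℕ :=
  Nat.card {p : G × G // p.1 ∈ X ∧ p.2 ∈ Y ∧ p.1 * p.2 = z}

/-- An S-ring (Schur ring) over a finite group `G`, given by its partition of `G`
into basic sets: the partition contains `{1}`, is closed under taking inverses,
and the structure constants are constant on each class (equivalently, the
ℤ-span of the indicator elements of the classes is a subring of ℤG). -/
structure SRing (G : Type*) [Group G] [Finite G] where
  parts : Set (Set G)
  nonempty_mem : ∀ X ∈ parts, X.Nonempty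
  exists_mem : ∀ g : G, ∃ X ∈ parts, g ∈ X
  eq_of_mem : ∀ X ∈ parts, ∀ Y ∈ parts, ∀ g : G, g ∈ X → g ∈ Y → X = Y
  one_mem : ({1} : Set G) ∈ parts
  inv_mem : ∀ X ∈ parts, X⁻¹ ∈ parts
  structConst_const : ∀ X ∈ parts, ∀ Y ∈ parts, ∀ Z ∈ parts, ∀ z ∈ Z, ∀ z' ∈ Z,
    structConst X Y z = structConst X Y z'

/-- `R(X) = {(g, x*g) : x ∈ X, g ∈ G}`, the edge set of the Cayley graph `Cay(G,X)`. -/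
def RSet {G : Type*} [Group G] (X : Set G) : Set (G × G) :=
  {p | ∃ x ∈ X, p.2 = x * p.1}

/-- The image of a binary relation under a map applied to both coordinates. -/
def mapRel {G G' : Type*} (f : G → G') (R : Set (G × G)) : Set (G' × G') :=
  (fun p : G × G => (f p.1, f p.2)) '' R

section Defs

variable {G G' : Type*} [Group G] [Finite G] [Group G'] [Finite G']

/-- A combinatorial isomorphism from the S-ring `A` to the S-ring `B`. -/
structure IsIso (A : SRing G) (B : SRing G') (f : G → G') : Prop where
  bijective : Function.Bijective f
  image_eq : (fun X : Set G => mapRel f (RSet X)) '' A.parts = RSet '' B.parts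

/-- An algebraic isomorphism from the S-ring `A` to the S-ring `B`:
a bijection between the basic sets preserving all structure constants. -/
structure IsAlgIso (A : SRing G) (B : SRing G') (φ : Set G → Set G') : Prop where
  bijOn : Set.BijOn φ A.parts B.parts
  structConst_eq : ∀ X ∈ A.parts, ∀ Y ∈ A.parts, ∀ Z ∈ A.parts,
    ∀ z ∈ Z, ∀ z' ∈ φ Z, structConst X Y z = structConst (φ X) (φ Y) z'

/-- The algebraic isomorphism `φ` is induced by the combinatorial isomorphism `f`
(i.e. `φ = φ_f`). -/
def InducedBy (A : SRing G) (φ : Set G → Set G') (f : G → G') : Prop :=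
  Function.Bijective f ∧ ∀ X ∈ A.parts, mapRel f (RSet X) = RSet (φ X)

/-- `A` is separable with respect to the class `𝒦_A` of finite abelian groups. -/
def SepAbelian (A : SRing G) : Prop :=
  ∀ (H : Type*) [CommGroup H] [Finite H] (B : SRing H) (φ : Set G → Set H),
    IsAlgIso A B φ → ∃ f : G → H, InducedBy A φ f

/-- `A` is separable with respect to the class `𝒦_C` of finite cyclic groups. -/
def SepCyclic (A : SRing G) : Prop :=
  ∀ (H : Type*) [Group H] [Finite H], IsCyclic H → ∀ (B : SRing H) (φ : Set G → Set H),
    IsAlgIso A B φ → ∃ f : G → H, InducedBy A φ f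

/-- `A` is schurian: `A = V(K, G)` for some group `K` with `G_right ≤ K ≤ Sym(G)`,
i.e. the basic sets of `A` are the orbits on `G` of the stabilizer of `1` in `K`. -/
def IsSchurian (A : SRing G) : Prop :=
  ∃ K : Subgroup (Equiv.Perm G),
    (∀ g : G, Equiv.mulRight g ∈ K) ∧
    A.parts = {X : Set G | ∃ g : G, X = {h : G | ∃ f ∈ K, f 1 = 1 ∧ f g = h}}

lemma mapRel_comp {A B C : Type*} (f : B → C) (g : A → B) (R : Set (A × A)) :
    mapRel (f ∘ g) R = mapRel f (mapRel g R) := by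
  simp only [mapRel, Set.image_image]
  rfl

lemma mapRel_id {A : Type*} (R : Set (A × A)) : mapRel (fun x => x) R = R := by
  simp [mapRel]

/-- The automorphism group `Aut(A)` of an S-ring, as a subgroup of `Sym(G)`. -/
def autSubgroup (A : SRing G) : Subgroup (Equiv.Perm G) where
  carrier := {f : Equiv.Perm G | ∀ X ∈ A.parts, mapRel f (RSet X) = RSet X}
  one_mem' := by
    intro X hX
    have h : ⇑(1 : Equiv.Perm G) = fun x => x := rfl
    rw [h, mapRel_id]
  mul_mem' := by
    intro f g hf hg X hX
    have h : ⇑(f * g) = ⇑f ∘ ⇑g := rfl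
    rw [h, mapRel_comp, hg X hX, hf X hX]
  inv_mem' := by
    intro f hf X hX
    conv_lhs => rw [← hf X hX]
    rw [← mapRel_comp]
    have h : ⇑f⁻¹ ∘ ⇑f = fun x => x := by
      funext x
      simp
    rw [h, mapRel_id]

/-- `A` is a normal S-ring: `G_right` is normal in `Aut(A)`. -/
def IsNormalSRing (A : SRing G) : Prop :=
  ∀ f ∈ autSubgroup A, ∀ g : G,
    ∃ g' : G, f * (Equiv.mulRight g : Equiv.Perm G) * f⁻¹ = Equiv.mulRight g'

/-- The partition of `G` into the orbits of `K ≤ Aut(G)`: the basic sets of the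
cyclotomic S-ring `cyc(K, G)`. -/
def cycParts (K : Subgroup (MulAut G)) : Set (Set G) :=
  {X : Set G | ∃ g : G, X = {h : G | ∃ f ∈ K, f g = h}}

/-- `H` is an `A`-subgroup: `H` is a union of basic sets of `A`. -/
def IsASubgroup (A : SRing G) (H : Subgroup G) : Prop :=
  ∀ X ∈ A.parts, X ⊆ (H : Set G) ∨ Disjoint X (H : Set G)

/-- `rad(X) = {g ∈ G : gX = Xg = X}`. -/
def radSet (X : Set G) : Set G :=
  {g : G | (fun x => g * x) '' X = X ∧ (fun x => x * g) '' X = X}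

/-- A subset of a cyclic group is highest if it contains a generator. -/
def IsHighest (X : Set G) : Prop :=
  ∃ x ∈ X, ∀ g : G, g ∈ Subgroup.zpowers x

/-- `A` is the `S`-wreath product with respect to the section `S = U/L`:
`U` and `L` are `A`-subgroups, `L ≤ U`, `L` is normal in `G`, and every basic
set outside `U` has `L` in its radical. -/
def IsSWreath (A : SRing G) (U L : Subgroup G) : Prop :=
  IsASubgroup A U ∧ IsASubgroup A L ∧ L ≤ U ∧ L.Normal ∧
    ∀ X ∈ A.parts, ¬ X ⊆ (U : Set G) → (L : Set G) ⊆ radSet X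

/-- `AU` is the restriction `A_U` of `A` to the `A`-subgroup `U`. -/
def IsRestriction (A : SRing G) (U : Subgroup G) (AU : SRing ↥U) : Prop :=
  AU.parts = {Y : Set ↥U | ∃ X ∈ A.parts, X ⊆ (U : Set G) ∧ Y = (Subtype.val ⁻¹' X : Set ↥U)}

/-- `AQ` is the quotient S-ring `A_{G/L}`. -/
def IsQuotientSRing (A : SRing G) (L : Subgroup G) [L.Normal] (AQ : SRing (G ⧸ L)) : Prop :=
  AQ.parts = {Y : Set (G ⧸ L) | ∃ X ∈ A.parts, Y = ((QuotientGroup.mk : G → G ⧸ L) '' X)}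

/-- The orbit of a pair under a permutation group, for the definition of 2-equivalence. -/
def orb2 {Ω : Type*} (K : Subgroup (Equiv.Perm Ω)) (p : Ω × Ω) : Set (Ω × Ω) :=
  {q : Ω × Ω | ∃ f ∈ K, (f p.1, f p.2) = q}

/-- Two permutation groups are 2-equivalent if they have the same orbits on `Ω × Ω`. -/
def TwoEquiv {Ω : Type*} (K K' : Subgroup (Equiv.Perm Ω)) : Prop :=
  {S : Set (Ω × Ω) | ∃ p, S = orb2 K p} = {S : Set (Ω × Ω) | ∃ p, S = orb2 K' p}

/-- A permutation group is 2-isolated if it is the only group 2-equivalent to it. -/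
def TwoIsolated {Ω : Type*} (K : Subgroup (Equiv.Perm Ω)) : Prop :=
  ∀ K' : Subgroup (Equiv.Perm Ω), TwoEquiv K K' → K' = K

end Defs

/-- `Aut(A)^S` for the section `S = G/N`: the permutations of `G/N` induced by
automorphisms of `A` permuting the `N`-cosets. -/
def inducedOnQuotient {G : Type*} [Group G] [Finite G] (A : SRing G) (N : Subgroup G)
    [N.Normal] : Set ((G ⧸ N) → (G ⧸ N)) :=
  {q : (G ⧸ N) → (G ⧸ N) | ∃ f : Equiv.Perm G, f ∈ autSubgroup A ∧
    (∀ u v : G, (u : G ⧸ N) = (v : G ⧸ N) → ((f u : G) : G ⧸ N) = ((f v : G) : G ⧸ N)) ∧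
    ∀ u : G, q (u : G ⧸ N) = ((f u : G) : G ⧸ N)}

end SRingPaper

/-! ### Colourings and Schur's multiplier theorem -/

namespace SchurColor

/-- A pair of colourings of two abelian groups with the same colours. The colour classes on each side
are the basic sets of an S-ring (`{1}` is a class, inversion respects colours), and equality of
colours is an algebraic isomorphism: equality of the structure constants is expressed by a
bijection which, for `g` and `h` of the same colour, matches the factorizations `g = a * (a⁻¹ * g)`
and `h = b * (b⁻¹ * h)` according to the colours of the two factors. In particular `Col c c` says
that the colour classes of `c` form an S-ring. -/
structure Col {G H C : Type*} [CommGroup G] [CommGroup H] (c : G → C) (d : H → C) : Prop where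
  one : c 1 = d 1
  left_one : ∀ g, c g = c 1 → g = 1
  right_one : ∀ h, d h = d 1 → h = 1
  inv : ∀ g h, c g = d h → c g⁻¹ = d h⁻¹
  ex_right : ∀ g, ∃ h, c g = d h
  ex_left : ∀ h, ∃ g, c g = d h
  bij : ∀ g h, c g = d h → ∃ e : G ≃ H, ∀ a, c a = d (e a) ∧ c (a⁻¹ * g) = d ((e a)⁻¹ * h)

namespace Col

variable {G H C : Type*} [CommGroup G] [CommGroup H] {c : G → C} {d : H → C}

lemma symm (h : Col c d) : Col d c where
  one := h.one.symm
  left_one := h.right_one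
  right_one := h.left_one
  inv := fun g k e => (h.inv k g e.symm).symm
  ex_right := fun g => (h.ex_left g).imp fun _ e => e.symm
  ex_left := fun g => (h.ex_right g).imp fun _ e => e.symm
  bij := by
    intro g k e
    obtain ⟨f, hf⟩ := h.bij k g e.symm
    exact ⟨f.symm, fun a => by
      have := hf (f.symm a)
      simp only [Equiv.apply_symm_apply] at this
      exact ⟨this.1.symm, this.2.symm⟩⟩

lemma refl (h : Col c d) : Col c c where
  one := rfl
  left_one := h.left_one
  right_one := h.left_one
  inv := by
    intro g k e
    obtain ⟨m, hm⟩ := h.ex_right g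
    rw [h.inv g m hm, h.inv k m (e ▸ hm)]
  ex_right := fun g => ⟨g, rfl⟩
  ex_left := fun g => ⟨g, rfl⟩
  bij := by
    intro g k e
    obtain ⟨m, hm⟩ := h.ex_right g
    obtain ⟨f, hf⟩ := h.bij g m hm
    obtain ⟨f', hf'⟩ := h.bij k m (e ▸ hm)
    exact ⟨f.trans f'.symm, fun a => by
      have := hf' (f'.symm (f a))
      simp only [Equiv.apply_symm_apply] at this
      exact ⟨(hf a).1.trans this.1.symm, (hf a).2.trans this.2.symm⟩⟩

lemma transfer (h : Col c d) {a b : G} {k : H} (e : c (a * b) = d k) :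
    ∃ a' b', a' * b' = k ∧ c a = d a' ∧ c b = d b' := by
  obtain ⟨f, hf⟩ := h.bij _ _ e
  exact ⟨f a, (f a)⁻¹ * k, by group, (hf a).1, by simpa using (hf a).2⟩

lemma card_eq (h : Col c d) : Nat.card G = Nat.card H := by
  obtain ⟨f, -⟩ := h.bij 1 1 h.one
  exact Nat.card_congr f

lemma card_pred (h : Col c d) (P : C → Prop) :
    Nat.card {g // P (c g)} = Nat.card {g // P (d g)} := by
  obtain ⟨f, hf⟩ := h.bij 1 1 h.one
  exact Nat.card_congr (f.subtypeEquiv fun a => by rw [(hf a).1])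

section mult
open MonoidAlgebra

lemma coeff_sum_mul {R : Type*} [CommRing R] [Fintype G] [DecidableEq C] (X : C)
    (v : MonoidAlgebra R G) (g : G) :
    ((∑ a : G, if c a = X then single a (1 : R) else 0) * v).coeff g =
      ∑ a : G, if c a = X then v.coeff (a⁻¹ * g) else 0 := by
  rw [Finset.sum_mul, coeff_sum, Finsupp.finsetSum_apply]
  refine Finset.sum_congr rfl fun a _ => ?_
  split_ifs
  · have := coeff_single_mul_mul v (1 : R) a (a⁻¹ * g)
    simpa using this
  · simp

lemma coeff_pow (h : Col c d) {R : Type*} [CommRing R] [Fintype G] [Fintype H] [DecidableEq C]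
    (X : C) (n : ℕ) : ∀ g k, c g = d k →
    ((∑ a : G, if c a = X then single a (1 : R) else 0) ^ n).coeff g =
    ((∑ a : H, if d a = X then single a (1 : R) else 0) ^ n).coeff k := by
  classical
  induction n with
  | zero =>
    intro g k e
    have : g = 1 ↔ k = 1 :=
      ⟨fun hg => h.right_one _ (by rw [← e, hg, h.one]), fun hk => h.left_one _ (by rw [e, hk, h.one])⟩
    simp only [pow_zero, one_def, coeff_single_apply, eq_comm (a := (1 : G)), eq_comm (a := (1 : H)),
      this]
  | succ n ih =>
    intro g k e
    rw [pow_succ', pow_succ', coeff_sum_mul, coeff_sum_mul]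
    obtain ⟨f, hf⟩ := h.bij _ _ e
    refine Fintype.sum_equiv f _ _ fun a => ?_
    rw [(hf a).1, ih _ _ (hf a).2]

/-- Since `(∑ a) ^ q = ∑ a ^ q` over `ZMod q` and `q` is prime to the order of the group, the `q`-th
power of the sum over a colour class is the sum over the `q`-th powers of its members. -/
lemma coeff_frob {q : ℕ} [Fact q.Prime] [Fintype G] [DecidableEq C]
    (hq : q.Coprime (Nat.card G)) (X : C) (g : G) :
    ((∑ a : G, if c a = X then single a (1 : ZMod q) else 0) ^ q).coeff (g ^ q) =
      if c g = X then 1 else 0 := by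
  classical
  have : CharP (MonoidAlgebra (ZMod q) G) q :=
    charP_of_injective_algebraMap (algebraMap (ZMod q) (MonoidAlgebra (ZMod q) G)).injective q
  rw [sum_pow_char, coeff_sum, Finsupp.finsetSum_apply, Finset.sum_eq_single g]
  · split_ifs
    · simp [single_pow]
    · simp [(Fact.out : q.Prime).ne_zero]
  · intro b _ hb
    split_ifs
    · rw [single_pow, coeff_single_apply, if_neg]
      intro h
      exact hb ((powCoprime (Nat.Coprime.symm hq)).injective (by simpa using h))
    · simp [(Fact.out : q.Prime).ne_zero]
  · simp

lemma root_prime (h : Col c d) [Finite G] [Finite H] {q : ℕ} (hqp : q.Prime)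
    (hq : q.Coprime (Nat.card G)) {g : G} {k : H} (e : c (g ^ q) = d (k ^ q)) : c g = d k := by
  classical
  cases nonempty_fintype G
  cases nonempty_fintype H
  have := Fact.mk hqp
  have := h.coeff_pow (R := ZMod q) (c g) q _ _ e
  rw [coeff_frob hq, coeff_frob (h.card_eq ▸ hq)] at this
  by_contra hne
  simp [Ne.symm hne] at this

lemma root (h : Col c d) [Finite G] [Finite H] {m : ℕ}
    (hm : m.Coprime (Nat.card G)) {g : G} {k : H} (e : c (g ^ m) = d (k ^ m)) : c g = d k := by
  induction m using Nat.recOnMul generalizing g k with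
  | zero =>
    have : Nat.card G = 1 := by simpa using hm
    have h1 : g = 1 := (Nat.card_eq_one_iff_unique.mp this).1.elim _ _
    have h2 : k = 1 := (Nat.card_eq_one_iff_unique.mp (h.card_eq ▸ this)).1.elim _ _
    rw [h1, h2, h.one]
  | one => simpa using e
  | prime q hq => exact h.root_prime hq hm e
  | mul a b iha ihb =>
    rw [pow_mul, pow_mul] at e
    exact iha (Nat.Coprime.coprime_mul_right hm) (ihb (Nat.Coprime.coprime_mul_left hm) e)

/-- Schur's theorem on multipliers: raising to a power prime to the order of the group permutes
the colour classes, in the same way on both sides. -/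
lemma mult (h : Col c d) [Finite G] [Finite H] {m : ℕ}
    (hm : m.Coprime (Nat.card G)) {g : G} {k : H} (e : c g = d k) : c (g ^ m) = d (k ^ m) := by
  obtain ⟨m', hm', hc⟩ : ∃ m', m * m' ≡ 1 [MOD Nat.card G] ∧ m'.Coprime (Nat.card G) := by
    obtain ⟨m', hm'⟩ := Nat.exists_mul_mod_eq_of_coprime 1 hm Nat.card_pos.ne'
    refine ⟨m', hm'.2, ?_⟩
    have : (m * m').Coprime (Nat.card G) := by
      rw [Nat.Coprime, Nat.ModEq.gcd_eq hm'.2]; simp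
    exact this.coprime_mul_left
  have key : ∀ {K : Type _} [Group K] [Finite K], Nat.card K = Nat.card G →
      ∀ x : K, (x ^ m) ^ m' = x := by
    intro K _ _ hK x
    rw [← pow_mul]
    conv_rhs => rw [← pow_one x]
    exact pow_eq_pow_iff_modEq.mpr ((hK ▸ hm' : m * m' ≡ 1 [MOD Nat.card K]).of_dvd (orderOf_dvd_natCard x))
  refine h.root hc ?_
  have h2 : (k ^ m) ^ m' = k := by
    rw [← pow_mul]
    conv_rhs => rw [← pow_one k]
    exact pow_eq_pow_iff_modEq.mpr ((h.card_eq ▸ hm' : m * m' ≡ 1 [MOD Nat.card H]).of_dvd (orderOf_dvd_natCard k))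
  rw [key rfl g, h2, e]

end mult
end Col
end SchurColor

/-! ### Cyclic p-groups, closed subgroups and radicals -/

namespace SchurColor

/-- `G` is a finite cyclic group of order a power of the prime `p`. -/
structure PCyc (p : ℕ) (G : Type*) [CommGroup G] : Prop where
  prime : p.Prime
  finite : Finite G
  cyclic : IsCyclic G
  card : ∃ k, Nat.card G = p ^ k

open Subgroup

namespace PCyc
variable {p : ℕ} {G : Type*} [CommGroup G]

lemma coprime (hP : PCyc p G) {m : ℕ} (hm : ¬ p ∣ m) : m.Coprime (Nat.card G) := by
  obtain ⟨k, hk⟩ := hP.card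
  rw [hk]
  exact Nat.Coprime.pow_right _ ((hP.prime.coprime_iff_not_dvd.mpr hm).symm)

lemma order (hP : PCyc p G) (x : G) : ∃ k, orderOf x = p ^ k := by
  obtain ⟨k, hk⟩ := hP.card
  obtain ⟨i, -, hi⟩ := (Nat.dvd_prime_pow hP.prime).mp (hk ▸ orderOf_dvd_natCard x)
  exact ⟨i, hi⟩

lemma mem_of_order (hP : PCyc p G) {a b : G} (hab : orderOf a ∣ orderOf b) : a ∈ zpowers b := by
  have := hP.finite
  have := hP.cyclic
  classical
  cases nonempty_fintype G
  have h1 := IsCyclic.card_pow_eq_one_le (α := G) (orderOf_pos b)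
  have h2 : ((zpowers b : Set G).toFinset) ⊆ Finset.univ.filter (fun g : G => g ^ orderOf b = 1) := by
    intro g hg
    have hg' : g ∈ zpowers b := by simpa using hg
    simpa using orderOf_dvd_iff_pow_eq_one.mp (orderOf_dvd_of_mem_zpowers hg')
  have h3 := Finset.eq_of_subset_of_card_le h2 (by
    rw [Set.toFinset_card, ← Nat.card_eq_fintype_card]
    exact h1.trans (Nat.card_zpowers b).ge)
  have h4 : a ∈ Finset.univ.filter (fun g : G => g ^ orderOf b = 1) := by
    simpa using orderOf_dvd_iff_pow_eq_one.mp hab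
  rw [← h3] at h4
  simpa using h4

lemma chain (hP : PCyc p G) (a b : G) : a ∈ zpowers b ∨ b ∈ zpowers a := by
  obtain ⟨i, hi⟩ := hP.order a
  obtain ⟨j, hj⟩ := hP.order b
  rcases le_total i j with h | h
  · exact Or.inl (hP.mem_of_order (hi ▸ hj ▸ pow_dvd_pow p h))
  · exact Or.inr (hP.mem_of_order (hi ▸ hj ▸ pow_dvd_pow p h))

lemma exists_pow (hP : PCyc p G) {a x : G} (ha : a ∈ zpowers x) : ∃ n : ℕ, x ^ n = a := by
  have := hP.finite
  exact Submonoid.mem_powers_iff _ _ |>.mp (mem_powers_iff_mem_zpowers.mpr ha)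

lemma mem_pow (hP : PCyc p G) {n : ℕ} (hn : ¬ p ∣ n) (x : G) : x ∈ zpowers (x ^ n) := by
  obtain ⟨m, hm⟩ := exists_pow_eq_self_of_coprime
    ((hP.coprime hn).coprime_dvd_right (orderOf_dvd_natCard x))
  exact ⟨m, by simpa using hm⟩

lemma not_mem_pow (hP : PCyc p G) {x : G} (hx : x ≠ 1) {n : ℕ} (hn : p ∣ n) :
    x ∉ zpowers (x ^ n) := by
  intro hmem
  obtain ⟨m, hm⟩ := hP.exists_pow hmem
  rw [← pow_mul] at hm
  obtain ⟨k, hk⟩ := hP.order x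
  have h1 : n * m ≡ 1 [MOD orderOf x] := pow_eq_pow_iff_modEq.mp (by rw [hm, pow_one])
  rcases Nat.eq_zero_or_pos k with rfl | hk0
  · exact hx (orderOf_eq_one_iff.mp (by simpa using hk))
  · have h2 : n * m ≡ 1 [MOD p] := h1.of_dvd (hk ▸ dvd_pow_self p hk0.ne')
    have h3 : p ∣ 1 := (h2.dvd_iff dvd_rfl).mp (hn.mul_right m)
    exact hP.prime.one_lt.ne' (Nat.dvd_one.mp h3)

/-- A proper element of `⟨x⟩` is a power of `x` with exponent divisible by `p`. -/
lemma exists_dvd (hP : PCyc p G) {a x : G} (ha : a ∈ zpowers x) (hx : x ∉ zpowers a) :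
    ∃ n : ℕ, p ∣ n ∧ x ^ n = a := by
  obtain ⟨n, rfl⟩ := hP.exists_pow ha
  exact ⟨n, by_contra fun h => hx (hP.mem_pow h x), rfl⟩

lemma exists_coprime (hP : PCyc p G) {a x : G} (ha : a ∈ zpowers x) (hx : x ∈ zpowers a) :
    ∃ n : ℕ, ¬ p ∣ n ∧ x ^ n = a := by
  obtain ⟨n, rfl⟩ := hP.exists_pow ha
  by_cases h1 : x = 1
  · exact ⟨1, hP.prime.one_lt.ne' ∘ Nat.dvd_one.mp, by simp [h1]⟩
  · exact ⟨n, fun h => hP.not_mem_pow h1 h hx, rfl⟩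

lemma exists_min (hP : PCyc p G) {P : G → Prop} {x : G} (hx : P x) :
    ∃ y, P y ∧ ∀ z, P z → y ∈ zpowers z := by
  have := hP.finite
  obtain ⟨y, hy, hmin⟩ := Set.exists_min_image {z | P z} orderOf (Set.toFinite _) ⟨x, hx⟩
  refine ⟨y, hy, fun z hz => (hP.chain y z).elim id fun h => ?_⟩
  exact hP.mem_of_order (le_antisymm (hmin z hz)
    (Nat.le_of_dvd (orderOf_pos y) (orderOf_dvd_of_mem_zpowers h))).dvd

lemma exists_max (hP : PCyc p G) {P : G → Prop} {x : G} (hx : P x) :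
    ∃ y, P y ∧ ∀ z, P z → z ∈ zpowers y := by
  have := hP.finite
  obtain ⟨y, hy, hmax⟩ := Set.exists_max_image {z | P z} orderOf (Set.toFinite _) ⟨x, hx⟩
  refine ⟨y, hy, fun z hz => (hP.chain z y).elim id fun h => ?_⟩
  exact hP.mem_of_order (le_antisymm (hmax z hz)
    (Nat.le_of_dvd (orderOf_pos z) (orderOf_dvd_of_mem_zpowers h))).dvd

/-- If `x ∉ L` then some power of `x` represents an element of order `p` modulo `L`. -/
lemma exists_step (hP : PCyc p G) (L : Subgroup G) {x : G} (hx : x ∉ L) :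
    ∃ e ∈ zpowers x, e ∉ L ∧ e ^ p ∈ L := by
  obtain ⟨k, hk⟩ := hP.order x
  have hex : ∃ i, x ^ p ^ i ∈ L := ⟨k, by rw [← hk, pow_orderOf_eq_one]; exact L.one_mem⟩
  classical
  obtain ⟨i, hi⟩ : ∃ i, Nat.find hex = i + 1 := by
    refine Nat.exists_eq_succ_of_ne_zero fun h0 => hx ?_
    simpa [h0] using Nat.find_spec hex
  refine ⟨x ^ p ^ i, npow_mem_zpowers x _, Nat.find_min hex (by omega), ?_⟩
  rw [← pow_mul, ← pow_succ, ← hi]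
  exact Nat.find_spec hex

end PCyc

/-- `L` is a union of colour classes. -/
def Closed {G C : Type*} [CommGroup G] (c : G → C) (L : Subgroup G) : Prop :=
  ∀ l ∈ L, ∀ g, c g = c l → g ∈ L

/-- The radical (stabilizer under translations) of the colour class of `u`. -/
def rad {G C : Type*} [CommGroup G] (c : G → C) (u : G) : Subgroup G where
  carrier := {g | ∀ z, c (g * z) = c u ↔ c z = c u}
  one_mem' := by simp
  mul_mem' := by
    intro a b ha hb z
    rw [mul_assoc, ha, hb]
  inv_mem' := by
    intro a ha z
    rw [← ha]
    simp

namespace Col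
variable {p : ℕ} {G H C : Type*} [CommGroup G] [CommGroup H] {c : G → C} {d : H → C}

lemma mem_rad {u g : G} : g ∈ rad c u ↔ ∀ z, c (g * z) = c u ↔ c z = c u := Iff.rfl

lemma mem_rad_of [Finite G] {u g : G} (hg : ∀ z, c z = c u → c (g * z) = c u) :
    g ∈ rad c u := by
  have key : ∀ n : ℕ, ∀ z, c z = c u → c (g ^ n * z) = c u := by
    intro n
    induction n with
    | zero => simp
    | succ n ih => intro z hz; rw [pow_succ', mul_assoc]; exact hg _ (ih _ hz)
  intro z
  refine ⟨fun hz => ?_, hg z⟩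
  obtain ⟨n, hn⟩ := (Submonoid.mem_powers_iff _ _).mp
    (mem_powers_iff_mem_zpowers.mpr (inv_mem (mem_zpowers g)))
  have := key n _ hz
  rw [hn] at this
  simpa using this

lemma rad_congr {u v : G} (e : c u = c v) : rad c u = rad c v := by
  ext g; simp only [mem_rad, e]

lemma mul_of_rad {u g z : G} (hg : g ∈ rad c u) (hz : c z = c u) : c (z * g) = c u := by
  rw [mul_comm]; exact (hg z).mpr hz

lemma not_mem_rad (h : Col c d) {u z : G} (hu : u ≠ 1) (hz : c z = c u) : z ∉ rad c u := by
  intro hr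
  have := (hr 1).mp (by simpa using hz)
  exact hu (h.left_one _ this.symm)

lemma rad_closed (h : Col c c) [Finite G] (u : G) : Closed c (rad c u) := by
  intro l hl g hg
  obtain ⟨e, he⟩ := h.bij l g hg.symm
  rw [← inv_mem_iff]
  refine mem_rad_of fun z hz => ?_
  obtain ⟨a, rfl⟩ := e.surjective z
  have h1 : c (l⁻¹ * a) = c u := ((inv_mem hl) a).mpr ((he a).1.trans hz)
  have h2 := h.inv _ _ (he a).2
  simp only [mul_inv_rev, inv_inv] at h2
  exact h2.symm.trans h1

lemma closed_zpowers (h : Col c c) [Finite G] {v : G} (hv : ∀ z, c z = c v → z ∈ zpowers v) :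
    Closed c (zpowers v) := by
  have key : ∀ n : ℕ, ∀ g, c g = c (v ^ n) → g ∈ zpowers v := by
    intro n
    induction n with
    | zero => intro g hg; rw [pow_zero] at hg; rw [h.left_one g hg]; exact one_mem _
    | succ n ih =>
      intro g hg
      rw [pow_succ] at hg
      obtain ⟨a, b, rfl, ha, hb⟩ := h.transfer hg.symm
      exact mul_mem (ih _ ha.symm) (hv _ hb.symm)
  intro l hl g hg
  obtain ⟨n, rfl⟩ := (Submonoid.mem_powers_iff _ _).mp (mem_powers_iff_mem_zpowers.mpr hl)
  exact key n g hg

lemma rad_le {u : G} {L : Subgroup G} (hX : ∀ z, c z = c u → z ∈ L) : rad c u ≤ L := by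
  intro g hg
  have := hX _ ((hg u).mpr rfl)
  exact (mul_mem_cancel_right (hX u rfl)).mp this

end Col
end SchurColor

/-! ### Overlaps of a class with its translates -/

namespace SchurColor
open Subgroup Finset
namespace Col

section overlap
variable {G C : Type*} [CommGroup G] [Fintype G] {c : G → C}

open Classical in
/-- The size of `S ∩ gS`, where `S = {z | P z}`. -/
noncomputable def ov (P : G → Prop) (g : G) : ℕ := #{z | P z ∧ P (g⁻¹ * z)}

open Classical in
lemma ov_congr (h : Col c c) {P : C → Prop} {g g' : G} (e : c g = c g') :
    ov (fun z => P (c z)) g = ov (fun z => P (c z)) g' := by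
  obtain ⟨f, hf⟩ := h.bij g g' e
  refine Finset.card_equiv f fun a => ?_
  have h2 := h.inv _ _ (hf a).2
  simp only [mul_inv_rev, inv_inv] at h2
  simp only [mem_filter, mem_univ, true_and, (hf a).1, h2]

open Classical in
lemma sum_ov (P Q : G → Prop) :
    ∑ g with Q g, ov P g = ∑ z with P z, #{g | Q g ∧ P (g⁻¹ * z)} := by
  simp only [ov, card_filter, sum_filter]
  rw [Finset.sum_congr rfl (g := fun g => ∑ z, if Q g ∧ P z ∧ P (g⁻¹ * z) then 1 else 0),
    Finset.sum_comm]
  · refine Finset.sum_congr rfl fun z _ => ?_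
    split_ifs with hz
    · simp [hz]
    · simp [hz]
  · intro g _
    split_ifs with hz
    · simp [hz]
    · simp [hz]

open Classical in
lemma sum_ov_univ (P : G → Prop) : ∑ g, ov P g = #{z | P z} ^ 2 := by
  have := sum_ov P (fun _ => True)
  simp only [filter_true, true_and] at this
  rw [this, sq, ← smul_eq_mul, ← sum_const]
  refine sum_congr rfl fun z _ => ?_
  refine card_bij (fun g _ => g⁻¹ * z) ?_ ?_ ?_
  · simp
  · simp
  · intro b hb
    exact ⟨z * b⁻¹, by simpa using hb, by simp⟩

open Classical in
lemma ov_of_stab {P : G → Prop} {g : G} (hg : ∀ z, P z → P (g⁻¹ * z)) : ov P g = #{z | P z} := by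
  unfold ov
  congr 1
  ext z
  simpa using hg z

end overlap

variable {p : ℕ} {G C : Type*} [CommGroup G] {c : G → C}

/-- If a class contains `y` and `z` with `⟨y⟩ < ⟨z⟩`, then translating `z` by an element of order
`p` modulo the radical stays inside the class. -/
lemma inv_step (hP : PCyc p G) (h : Col c c) {x y z w : G} (hx : x ≠ 1) (hy : c y = c x)
    (hz : c z = c x) (hyz : y ∈ zpowers z) (hzy : z ∉ zpowers y) (hw : w ^ p ∈ rad c x) :
    c (z * w) = c x := by
  have := hP.finite
  obtain ⟨k, hk, rfl⟩ := hP.exists_dvd hyz hzy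
  have hnot : z ∉ zpowers w := by
    intro hzw
    obtain ⟨i, rfl⟩ := hP.exists_pow hzw
    obtain ⟨k', rfl⟩ := hk
    refine h.not_mem_rad hx hy ?_
    have : ((w ^ i) ^ (p * k')) = (w ^ p) ^ (i * k') := by rw [← pow_mul, ← pow_mul]; congr 1; ring
    rw [this]
    exact pow_mem hw _
  obtain ⟨n, hn, rfl⟩ := hP.exists_dvd ((hP.chain w z).resolve_right hnot) hnot
  have hm : ¬ p ∣ 1 + n := fun hd => hP.prime.one_lt.ne' (Nat.dvd_one.mp ((Nat.dvd_add_left hn).mp hd))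
  have h1 := h.mult (hP.coprime hm) (hy.trans hz.symm)
  have h2 : c ((z ^ k) ^ (1 + n)) = c x := by
    obtain ⟨k', rfl⟩ := hk
    have : (z ^ (p * k')) ^ (1 + n) = z ^ (p * k') * ((z ^ n) ^ p) ^ k' := by
      rw [← pow_mul, ← pow_mul, ← pow_mul, ← pow_add]; congr 1; ring
    rw [this]
    exact mul_of_rad (pow_mem hw _) hy
  rw [← h2, h1, pow_add, pow_one]

open Classical in
/-- If a class contains `x` and a non-generator of `⟨x⟩`, and `⟨y⟩` is the smallest subgroup generated
by a member `y`, then at most a third of the class lies in `⟨y⟩`: every member `t` of `⟨y⟩` is the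
`k`-th power of two further members `s` and `s * w`, where `x ^ k = y` and `w` has order `p`. -/
lemma three_le (hP : PCyc p G) (h : Col c c) [Fintype G] {x y : G} (hx : x ≠ 1) (hy : c y = c x)
    (hyx : y ∈ zpowers x) (hxy : x ∉ zpowers y) (hmin : ∀ z, c z = c x → y ∈ zpowers z) :
    3 * #{z | c z = c x ∧ z ∈ zpowers y} ≤ #{z | c z = c x} := by
  have hy1 : y ≠ 1 := by
    rintro rfl
    exact hx (h.left_one _ hy.symm)
  obtain ⟨w, hwy, hw1, hwp⟩ := hP.exists_step ⊥ (x := y) (by simpa using hy1)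
  rw [mem_bot] at hw1 hwp
  obtain ⟨k, hk, rfl⟩ := hP.exists_dvd hyx hxy
  set T : Finset G := {z | c z = c x ∧ z ∈ zpowers (x ^ k)} with hT
  have hex : ∀ t ∈ T, ∃ s, c s = c x ∧ c (s * w) = c x ∧ s ^ k = t ∧ x ∈ zpowers s := by
    intro t ht
    simp only [hT, mem_filter, mem_univ, true_and] at ht
    obtain ⟨m, hm, rfl⟩ := hP.exists_coprime ht.2 (hmin t ht.1)
    have h1 : c (x ^ m) = c x := (h.mult (hP.coprime hm) hy).symm.trans ht.1
    refine ⟨x ^ m, h1, ?_, by rw [← pow_mul, ← pow_mul, mul_comm], hP.mem_pow hm x⟩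
    refine inv_step hP h hx ht.1 h1 ?_ ?_ (by rw [hwp]; exact one_mem _)
    · rw [← pow_mul, mul_comm, pow_mul]
      exact npow_mem_zpowers _ _
    · intro hmem
      refine hxy (zpowers_le.mpr ?_ (hP.mem_pow hm x))
      exact zpowers_le.mpr (npow_mem_zpowers (x ^ k) m) hmem
  choose! s hs1 hs2 hs3 hs4 using hex
  have hwk : w ^ k = 1 := by
    obtain ⟨k', rfl⟩ := hk
    rw [pow_mul, hwp, one_pow]
  have hsT : ∀ t ∈ T, s t ∉ zpowers (x ^ k) := fun t ht hmem =>
    hxy (zpowers_le.mpr hmem (hs4 t ht))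
  have hi1 : Set.InjOn s T := fun a ha b hb hab => by rw [← hs3 a ha, ← hs3 b hb, hab]
  have hd1 : Disjoint T (T.image s) := by
    rw [Finset.disjoint_left]
    intro t ht hmem
    obtain ⟨t', ht', rfl⟩ := mem_image.mp hmem
    exact hsT t' ht' (mem_filter.mp ht).2.2
  have hd2 : Disjoint T (T.image fun t => s t * w) := by
    rw [Finset.disjoint_left]
    intro t ht hmem
    obtain ⟨t', ht', rfl⟩ := mem_image.mp hmem
    exact hsT t' ht' ((mul_mem_cancel_right hwy).mp (mem_filter.mp ht).2.2)
  have hd3 : Disjoint (T.image s) (T.image fun t => s t * w) := by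
    rw [Finset.disjoint_left]
    intro t ht hmem
    obtain ⟨t', ht', rfl⟩ := mem_image.mp hmem
    obtain ⟨t'', ht'', h2⟩ := mem_image.mp ht
    have h3 : t'' = t' := by
      rw [← hs3 t' ht', ← hs3 t'' ht'', h2, mul_pow, hwk, mul_one]
    subst h3
    exact hw1 (by simpa using h2)
  have hsub : T ∪ T.image s ∪ (T.image fun t => s t * w) ⊆ ({z | c z = c x} : Finset G) := by
    intro z hz
    simp only [mem_union, mem_image] at hz
    rw [mem_filter]
    refine ⟨mem_univ _, ?_⟩
    rcases hz with (hz | ⟨t, ht, rfl⟩) | ⟨t, ht, rfl⟩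
    · exact (mem_filter.mp hz).2.1
    · exact hs1 t ht
    · exact hs2 t ht
  have := card_le_card hsub
  rw [card_union_of_disjoint (disjoint_union_left.mpr ⟨hd2, hd3⟩), card_union_of_disjoint hd1,
    card_image_of_injOn hi1, card_image_of_injOn (fun a ha b hb hab => hi1 ha hb (by simpa using hab))]
    at this
  omega

end Col
end SchurColor

/-! ### Classes containing generators and non-generators -/

namespace SchurColor
open Subgroup Finset
namespace Col
variable {p : ℕ} {G C : Type*} [CommGroup G] {c : G → C}

open Classical in
/-- If every translate of the class of `x` by an element of the closed subgroup `V` misses at most a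
third of the class, then averaging over `V` shows that more than half of each coset of `V` meeting
the class lies in it, and the multipliers `1 + n` force the whole coset to lie in it. -/
lemma small_case (hP : PCyc p G) (h : Col c c) [Fintype G] {x : G} {V : Subgroup G}
    (hV : Closed c V) (hVx : V ≤ zpowers x) (hxV : x ∉ V) {t : ℕ}
    (ht : 3 * t ≤ #{z | c z = c x}) (hb : ∀ g ∈ V, #{z | c z = c x} ≤ ov (fun z => c z = c x) g + t) :
    V ≤ rad c x := by
  set X : Finset G := {z | c z = c x} with hX
  set VF : Finset G := {g | g ∈ V} with hVF
  let lam : G → ℕ := fun z => #{g | g ∈ V ∧ c (g⁻¹ * z) = c x}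
  have hlam : ∀ z, c z = c x → lam z = lam x := by
    intro z hz
    obtain ⟨f, hf⟩ := h.bij z x hz
    refine Finset.card_equiv f fun a => ?_
    have : a ∈ V ↔ f a ∈ V :=
      ⟨fun ha => hV _ ha _ (hf a).1.symm, fun ha => hV _ ha _ (hf a).1⟩
    simp only [mem_filter, mem_univ, true_and, this, (hf a).2]
  have hXpos : 0 < #X := card_pos.mpr ⟨x, by simp [hX]⟩
  have hVpos : 0 < #VF := card_pos.mpr ⟨1, by simp [hVF]⟩
  have hsum : ∑ g with g ∈ V, ov (fun z => c z = c x) g = #X * lam x := by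
    rw [sum_ov, ← smul_eq_mul, ← sum_const]
    exact sum_congr rfl fun z hz => hlam z (mem_filter.mp hz).2
  have h2 : #VF * #X ≤ #X * lam x + #VF * t := by
    rw [← hsum, ← smul_eq_mul #VF t, ← sum_const, ← smul_eq_mul, ← sum_const, ← sum_add_distrib]
    exact sum_le_sum fun g hg => hb g (mem_filter.mp hg).2
  have h3 : 2 * #VF ≤ 3 * lam x := by
    have : #X * (2 * #VF) ≤ #X * (3 * lam x) := by nlinarith
    exact Nat.le_of_mul_le_mul_left this hXpos
  -- every translate `x * g`, `g ∈ V`, lies in the class: two more-than-half subsets of `xV` meet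
  have hxg : ∀ g ∈ V, c (x * g) = c x := by
    intro g hg
    obtain ⟨n, hn, rfl⟩ := hP.exists_dvd (hVx hg) (fun hm => hxV (zpowers_le.mpr hg hm))
    have hm : ¬ p ∣ 1 + n :=
      fun hd => hP.prime.one_lt.ne' (Nat.dvd_one.mp ((Nat.dvd_add_left hn).mp hd))
    have hcop := hP.coprime hm
    have hinj : Function.Injective fun a : G => a ^ (1 + n) :=
      (powCoprime hcop.symm).injective
    let A : Finset G := {g | g ∈ V ∧ c (g⁻¹ * x) = c x}
    let B : Finset G := {g | g ∈ V ∧ c (g⁻¹ * x) = c (x * x ^ n)}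
    have hAB : #A ≤ #B := by
      refine card_le_card_of_injOn (fun g => (x ^ n)⁻¹ * g ^ (1 + n)) ?_ ?_
      · intro a ha
        simp only [A, B, coe_filter, mem_univ, true_and, Set.mem_ofPred_eq] at ha ⊢
        refine ⟨mul_mem (inv_mem hg) (pow_mem ha.1 _), ?_⟩
        have := h.mult hcop ha.2
        rw [mul_inv_rev, inv_inv]
        convert this using 2
        · rw [mul_pow, inv_pow, pow_add x, pow_one, mul_assoc, mul_comm x]
        · rw [pow_add, pow_one]
      · intro a _ b _ hab
        exact hinj (by simpa using hab)
    have hsub : A ∪ B ⊆ VF := by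
      intro a ha
      simp only [A, B, mem_union, mem_filter, mem_univ, true_and] at ha
      simp only [hVF, mem_filter, mem_univ, true_and]
      tauto
    have hnd : ¬ Disjoint A B := by
      intro hd
      have := card_le_card hsub
      rw [card_union_of_disjoint hd] at this
      have hA : #A = lam x := rfl
      omega
    obtain ⟨a, ha, hb'⟩ := Finset.not_disjoint_iff.mp hnd
    exact (mem_filter.mp hb').2.2.symm.trans (mem_filter.mp ha).2.2
  have hfull : lam x = #VF := by
    refine congrArg card (filter_congr fun g _ => ?_)
    refine ⟨fun hg => hg.1, fun hg => ⟨hg, ?_⟩⟩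
    rw [mul_comm]
    exact hxg _ (inv_mem hg)
  intro g hg
  rw [← inv_mem_iff]
  refine mem_rad_of fun z hz => ?_
  have h4 : ({g | g ∈ V ∧ c (g⁻¹ * z) = c x} : Finset G) = VF := by
    refine Finset.eq_of_subset_of_card_le (fun a ha => ?_) (hfull.ge.trans (hlam z hz).ge)
    simp only [mem_filter, mem_univ, true_and] at ha
    simp [hVF, ha.1]
  have h5 : g ∈ VF := by simp [hVF, hg]
  rw [← h4] at h5
  exact (mem_filter.mp h5).2.2

open Classical in
/-- If the class of `x` contains an element `e` of order `p` modulo its radical `R`, then the class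
is `⟨x⟩ \ R`. The sum over `g` of the sizes of the overlaps `S ∩ gS` equals the square of the size
of `S`; applied to the class of `x` this shows that the class contains all generators of `⟨x⟩`,
and applied to the complement of the class in `⟨x⟩` that this complement is `R`. -/
lemma large_case (hP : PCyc p G) (h : Col c c) [Fintype G] {x y e : G} (hx : x ≠ 1)
    (hX : ∀ z, c z = c x → z ∈ zpowers x) (hy : c y = c x) (hxy : x ∉ zpowers y)
    (hmin : ∀ z, c z = c x → y ∈ zpowers z) (he : c e = c x) (hep : e ^ p ∈ rad c x)
    (hb : ∀ w : G, w ^ p ∈ rad c x → #{z | c z = c x} ≤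
      ov (fun z => c z = c x) w + #{z | c z = c x ∧ z ∈ zpowers y})
    {g : G} (hg : g ∈ zpowers x) (hgR : g ∉ rad c x) : c g = c x := by
  set X : Finset G := {z | c z = c x} with hXd
  have h3 : _ ≤ #X := three_le hP h hx hy (hX y hy) hxy hmin
  set t := #{z | c z = c x ∧ z ∈ zpowers y} with htd
  have hXpos : 0 < #X := card_pos.mpr ⟨x, by simp [hXd]⟩
  have hcl : Closed c (zpowers x) := closed_zpowers h hX
  have hRx : rad c x ≤ zpowers x := rad_le hX
  have hxe : x ∉ zpowers e := by
    intro hxe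
    obtain ⟨n, rfl⟩ := hP.exists_pow hxe
    obtain ⟨k, ⟨k', rfl⟩, hk⟩ := hP.exists_dvd (hX y hy) hxy
    refine h.not_mem_rad hx hy ?_
    rw [← hk, ← pow_mul, show n * (p * k') = p * (n * k') by ring, pow_mul]
    exact pow_mem hep _
  -- all generators of `⟨x⟩` lie in the class
  have hgen : ∀ m, ¬ p ∣ m → c (x ^ m) = c x := by
    intro m hm
    by_contra hne
    have hcop := hP.coprime hm
    have hinj : Function.Injective fun a : G => a ^ m := (powCoprime hcop.symm).injective
    set X2 : Finset G := {z | c z = c (x ^ m)} with hX2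
    have hle : #X ≤ #X2 := by
      refine card_le_card_of_injOn (fun a => a ^ m) ?_ hinj.injOn
      intro a ha
      simp only [hXd, hX2, coe_filter, mem_univ, true_and, Set.mem_ofPred_eq] at ha ⊢
      exact h.mult hcop ha
    have hdisj : Disjoint X X2 := by
      rw [Finset.disjoint_left]
      intro a ha ha2
      exact hne ((mem_filter.mp ha2).2.symm.trans (mem_filter.mp ha).2)
    have hbd : ∀ a ∈ X ∪ X2, #X - t ≤ ov (fun z => c z = c x) a := by
      intro a ha
      rcases mem_union.mp ha with ha | ha
      · have h1 : c a = c e := (mem_filter.mp ha).2.trans he.symm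
        rw [ov_congr h (P := fun γ => γ = c x) h1]
        have := hb e hep
        omega
      · have h1 : c a = c (e ^ m) := (mem_filter.mp ha).2.trans (h.mult hcop he).symm
        rw [ov_congr h (P := fun γ => γ = c x) h1]
        have := hb (e ^ m) (by rw [← pow_mul, mul_comm, pow_mul]; exact pow_mem hep _)
        omega
    have h4 : #(X ∪ X2) * (#X - t) ≤ #X ^ 2 := by
      rw [← sum_ov_univ, ← smul_eq_mul, ← sum_const]
      exact (sum_le_sum hbd).trans (sum_le_sum_of_subset (subset_univ _))
    rw [card_union_of_disjoint hdisj] at h4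
    have h5 : 2 * #X ≤ 3 * (#X - t) := by omega
    have h6 : (#X + #X) * (#X - t) ≤ #X ^ 2 := le_trans (Nat.mul_le_mul_right _ (by omega)) h4
    nlinarith
  have hpow : ∀ z m, ¬ p ∣ m → c z = c x → c (z ^ m) = c x := fun z m hm hz =>
    (h.mult (hP.coprime hm) hz).trans (hgen m hm)
  obtain ⟨P, hPz⟩ : ∃ P : C → Prop, ∀ z, P (c z) ↔ z ∈ zpowers x ∧ c z ≠ c x := by
    refine ⟨fun γ => γ ≠ c x ∧ ∃ l ∈ zpowers x, c l = γ, fun z => ⟨?_, ?_⟩⟩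
    · rintro ⟨h1, l, hl, h2⟩
      exact ⟨hcl l hl z h2.symm, h1⟩
    · rintro ⟨h1, h2⟩
      exact ⟨h2, z, h1, rfl⟩
  set N : Finset G := {z | P (c z)} with hN
  set R : Finset G := {z | z ∈ rad c x} with hR
  have hRN : R ⊆ N := by
    intro z hz
    have hz := (mem_filter.mp hz).2
    rw [hN, mem_filter, hPz]
    exact ⟨mem_univ _, hRx hz, fun h1 => h.not_mem_rad hx h1 hz⟩
  have hovN : #N ≤ ov (fun z => P (c z)) e + #R := by
    rw [← card_filter_add_card_filter_not (s := N) (p := fun z => P (c (e⁻¹ * z)))]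
    refine add_le_add (le_of_eq ?_) (card_le_card ?_)
    · rw [hN, filter_filter, ov]
    · intro z hz
      simp only [hN, mem_filter, mem_univ, true_and, hPz, not_and, not_not] at hz
      have h1 : c (e⁻¹ * z) = c x := hz.2 (mul_mem (inv_mem (hX e he)) hz.1.1)
      have h2 : e⁻¹ * z ∈ zpowers y := by
        by_contra hn
        refine hz.1.2 ?_
        have := inv_step hP h hx hy h1 (hmin _ h1) hn hep
        simpa [mul_comm] using this
      have h3 : z ∈ zpowers e := by
        have := zpowers_le.mpr (hmin e he) h2
        exact (mul_mem_cancel_left (inv_mem (mem_zpowers e))).mp this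
      have h4 : e ∉ zpowers z := by
        intro h4
        obtain ⟨m, hm, rfl⟩ := hP.exists_coprime h3 h4
        exact hz.1.2 (hpow _ _ hm he)
      obtain ⟨n, ⟨n', rfl⟩, rfl⟩ := hP.exists_dvd h3 h4
      simp only [hR, mem_filter, mem_univ, true_and, pow_mul]
      exact pow_mem hep _
  have hXN : Disjoint X R := by
    rw [Finset.disjoint_left]
    intro a ha hr
    exact h.not_mem_rad hx (mem_filter.mp ha).2 (mem_filter.mp hr).2
  have hsum : #X * (#N - #R) + #R * #N ≤ #N ^ 2 := by
    have h1 : ∑ a ∈ X ∪ R, ov (fun z => P (c z)) a ≤ #N ^ 2 := by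
      rw [← sum_ov_univ]
      exact sum_le_sum_of_subset (subset_univ _)
    rw [sum_union hXN] at h1
    refine le_trans (add_le_add ?_ ?_) h1
    · rw [← smul_eq_mul, ← sum_const]
      refine sum_le_sum fun a ha => ?_
      rw [ov_congr h (P := P) ((mem_filter.mp ha).2.trans he.symm)]
      omega
    · rw [← smul_eq_mul, ← sum_const]
      refine sum_le_sum fun a ha => le_of_eq (ov_of_stab fun z hz => ?_).symm
      have ha := (mem_filter.mp ha).2
      rw [hPz] at hz ⊢
      exact ⟨mul_mem (inv_mem (hRx ha)) hz.1, fun h1 => hz.2 ((inv_mem ha z).mp h1)⟩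
  have hNX : #N < #X := by
    have h1 : #N ≤ #(X.erase e) := by
      refine card_le_card_of_injOn (fun a => x * a) ?_ (mul_right_injective x).injOn
      intro a ha
      simp only [hN, coe_filter, mem_univ, true_and, Set.mem_ofPred_eq, hPz] at ha
      have hna : x ∉ zpowers a := by
        intro h1
        obtain ⟨m, hm, rfl⟩ := hP.exists_coprime ha.1 h1
        exact ha.2 (hgen m hm)
      obtain ⟨n, hn, rfl⟩ := hP.exists_dvd ha.1 hna
      have hm : ¬ p ∣ 1 + n :=
        fun hd => hP.prime.one_lt.ne' (Nat.dvd_one.mp ((Nat.dvd_add_left hn).mp hd))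
      have hxx : x * x ^ n = x ^ (1 + n) := by rw [pow_add, pow_one]
      simp only [coe_erase, Set.mem_sdiff, Set.mem_singleton_iff, hXd, coe_filter, mem_univ, true_and,
        Set.mem_ofPred_eq, hxx]
      exact ⟨hgen _ hm, fun h1 => hxe (h1 ▸ hP.mem_pow hm x)⟩
    have h2 : #(X.erase e) < #X := card_erase_lt_of_mem (by simp [hXd, he])
    omega
  have hRle : #R ≤ #N := card_le_card hRN
  have hNR : #N ≤ #R := by
    by_contra hlt
    push Not at hlt
    obtain ⟨a, ha⟩ := Nat.exists_eq_add_of_lt hlt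
    obtain ⟨b, hb⟩ := Nat.exists_eq_add_of_lt hNX
    rw [hb, ha] at hsum
    have : #R + a + 1 - #R = a + 1 := by omega
    rw [this] at hsum
    nlinarith
  have heq := Finset.eq_of_subset_of_card_le hRN hNR
  by_contra hne
  have : g ∈ N := by
    rw [hN, mem_filter, hPz]
    exact ⟨mem_univ _, hg, hne⟩
  rw [← heq] at this
  exact hgR (mem_filter.mp this).2

/-- The structure theorem: a class contained in `⟨x⟩` which contains `x` and also a non-generator of
`⟨x⟩` is the complement in `⟨x⟩` of its radical. -/
theorem structure_thm (hP : PCyc p G) (h : Col c c) : ∀ x : G,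
    (∀ z, c z = c x → z ∈ zpowers x) → (∃ y, c y = c x ∧ x ∉ zpowers y) →
    ∀ g ∈ zpowers x, g ∉ rad c x → c g = c x := by
  classical
  have := hP.finite
  cases nonempty_fintype G
  intro x
  induction hn : orderOf x using Nat.strong_induction_on generalizing x with
  | _ n ih =>
  subst hn
  rintro hX ⟨y', hy', hxy'⟩ g hg hgR
  have hx : x ≠ 1 := by
    rintro rfl
    exact hxy' (one_mem _)
  obtain ⟨y, hy, hmin⟩ := hP.exists_min (P := fun z => c z = c x) (x := x) rfl
  have hxy : x ∉ zpowers y := fun hm => hxy' (zpowers_le.mpr (hmin y' hy') hm)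
  have hcl : Closed c (zpowers x) := closed_zpowers h hX
  have hb : ∀ w : G, w ^ p ∈ rad c x → #{z | c z = c x} ≤
      ov (fun z => c z = c x) w + #{z | c z = c x ∧ z ∈ zpowers y} := by
    intro w hw
    rw [← card_filter_add_card_filter_not (s := {z | c z = c x}) (p := fun z => c (w⁻¹ * z) = c x)]
    refine add_le_add (le_of_eq ?_) (card_le_card ?_)
    · rw [filter_filter, ov]
    · intro z hz
      simp only [mem_filter, mem_univ, true_and] at hz ⊢
      refine ⟨hz.1, by_contra fun hn => hz.2 ?_⟩
      rw [mul_comm]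
      exact inv_step hP h hx hy hz.1 (hmin z hz.1) hn (by rw [inv_pow]; exact inv_mem hw)
  obtain ⟨e, hex, heR, hep⟩ := hP.exists_step (rad c x) (h.not_mem_rad hx rfl)
  obtain ⟨v, hv, hmax⟩ := hP.exists_max (P := fun z => c z = c e) (x := e) rfl
  have hvx : v ∈ zpowers x := hcl e hex v hv
  have hv' : ∀ z, c z = c v → z ∈ zpowers v := fun z hz => hmax z (hz.trans hv)
  by_cases hxv : x ∈ zpowers v
  · obtain ⟨m, hm, rfl⟩ := hP.exists_coprime hxv hvx
    have h1 := h.mult (hP.coprime hm) hv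
    exact large_case hP h hx hX hy hxy hmin h1.symm
      (by rw [← pow_mul, mul_comm, pow_mul]; exact pow_mem hep _) hb hg hgR
  · exfalso
    refine heR (small_case hP h (closed_zpowers h hv') (zpowers_le.mpr hvx) hxv
      (three_le hP h hx hy (hX y hy) hxy hmin) (fun w hw => ?_) (hmax e rfl))
    by_cases hwe : w ∈ zpowers e
    · refine hb w ?_
      obtain ⟨n, rfl⟩ := hP.exists_pow hwe
      rw [← pow_mul, mul_comm, pow_mul]
      exact pow_mem hep _
    · have hew := (hP.chain w e).resolve_left hwe
      have hve : v ∉ zpowers e := fun hm => hwe (zpowers_le.mpr hm hw)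
      have hlt : orderOf v < orderOf x := by
        refine lt_of_le_of_ne (Nat.le_of_dvd (orderOf_pos x) (orderOf_dvd_of_mem_zpowers hvx)) ?_
        exact fun heq => hxv (hP.mem_of_order heq.symm.dvd)
      have hv1 : v ≠ 1 := by
        rintro rfl
        exact hve (one_mem _)
      have h1 : c w = c v := ih _ hlt v rfl hv' ⟨e, hv.symm, hve⟩ w hw
        fun hw' => h.not_mem_rad hv1 hv.symm (zpowers_le.mpr hw' hew)
      rw [ov_congr h (P := fun γ => γ = c x) (h1.trans hv)]
      exact hb e hep

end Col
end SchurColor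

/-! ### Quotients -/

namespace SchurColor
open Subgroup

/-- The subgroup of `H` corresponding to a closed subgroup `L` of `G`; it consists of the elements
whose colour occurs in `L`, see `Col.mem_img`. -/
def img {G H C : Type*} [CommGroup G] [CommGroup H] (c : G → C) (d : H → C) (L : Subgroup G) :
    Subgroup H :=
  Subgroup.closure {k | ∃ l ∈ L, c l = d k}

/-- The colouring of `G ⧸ R` induced by `c`: a coset is coloured by the set of colours on it. -/
def qcol {G C : Type*} [CommGroup G] (c : G → C) (R : Subgroup G) (q : G ⧸ R) : Set C :=
  {γ | ∃ g : G, (g : G ⧸ R) = q ∧ c g = γ}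

namespace Col
variable {p : ℕ} {G H C : Type*} [CommGroup G] [CommGroup H] {c : G → C} {d : H → C}

lemma mem_img (h : Col c d) {L : Subgroup G} (hL : Closed c L) {k : H} :
    k ∈ img c d L ↔ ∃ l ∈ L, c l = d k := by
  refine ⟨fun hk => ?_, fun hk => subset_closure hk⟩
  induction hk using Subgroup.closure_induction with
  | mem k hk => exact hk
  | one => exact ⟨1, one_mem _, h.one⟩
  | mul a b _ _ ha hb =>
    obtain ⟨g, hg⟩ := h.ex_left (a * b)
    obtain ⟨a', b', rfl, h1, h2⟩ := h.symm.transfer hg.symm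
    obtain ⟨l1, hl1, e1⟩ := ha
    obtain ⟨l2, hl2, e2⟩ := hb
    exact ⟨_, mul_mem (hL _ hl1 _ (h1.symm.trans e1.symm)) (hL _ hl2 _ (h2.symm.trans e2.symm)), hg⟩
  | inv a _ ha =>
    obtain ⟨l, hl, e⟩ := ha
    exact ⟨l⁻¹, inv_mem hl, h.inv _ _ e⟩

lemma mem_img_iff (h : Col c d) {L : Subgroup G} (hL : Closed c L) {g : G} {k : H}
    (e : c g = d k) : k ∈ img c d L ↔ g ∈ L := by
  rw [h.mem_img hL]
  exact ⟨fun ⟨l, hl, e'⟩ => hL l hl g (e.trans e'.symm), fun hg => ⟨g, hg, e⟩⟩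

lemma img_mono {L M : Subgroup G} (hLM : L ≤ M) : img c d L ≤ img c d M :=
  Subgroup.closure_mono fun _ ⟨l, hl, e⟩ => ⟨l, hLM hl, e⟩

lemma card_img (h : Col c d) {L : Subgroup G} (hL : Closed c L) :
    Nat.card L = Nat.card (img c d L) := by
  have := h.card_pred fun γ => ∃ l ∈ L, c l = γ
  refine (Nat.card_congr (Equiv.subtypeEquivRight fun g => ?_)).trans
    (this.trans (Nat.card_congr (Equiv.subtypeEquivRight fun k => ?_)))
  · exact ⟨fun hg => ⟨g, hg, rfl⟩, fun ⟨l, hl, e⟩ => hL l hl g e.symm⟩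
  · exact (h.mem_img hL).symm

lemma qcol_congr (h : Col c d) {R : Subgroup G} (hR : Closed c R) {g : G} {k : H}
    (e : c g = d k) : qcol c R g = qcol d (img c d R) k := by
  ext γ
  constructor
  · rintro ⟨g', hg', rfl⟩
    have h1 : g'⁻¹ * g ∈ R := QuotientGroup.eq.mp hg'
    obtain ⟨a, b, hab, ha, hb⟩ := h.transfer (a := g') (b := g'⁻¹ * g) (k := k) (by simpa using e)
    refine ⟨a, QuotientGroup.eq.mpr ?_, ha.symm⟩
    rw [← hab]
    simpa using (h.mem_img_iff hR hb).mpr h1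
  · rintro ⟨k', hk', rfl⟩
    have h1 : k'⁻¹ * k ∈ img c d R := QuotientGroup.eq.mp hk'
    obtain ⟨a, b, hab, ha, hb⟩ := h.symm.transfer (a := k') (b := k'⁻¹ * k) (k := g)
      (by simpa using e.symm)
    refine ⟨a, QuotientGroup.eq.mpr ?_, ha.symm⟩
    rw [← hab]
    simpa using (h.mem_img_iff hR hb.symm).mp h1

lemma card_mk_preimage {R : Subgroup G} (P : G ⧸ R → Prop) :
    Nat.card {g : G // P g} = Nat.card R * Nat.card {q // P q} := by
  rw [← Nat.card_prod]
  exact Nat.card_congr (QuotientGroup.preimageMkEquivSubgroupProdSet R {q | P q})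

lemma qcol_self (R : Subgroup G) (g : G) : c g ∈ qcol c R g := ⟨g, rfl, rfl⟩

/-- An algebraic isomorphism induces one of the quotients by corresponding closed subgroups. -/
lemma quot (h : Col c d) [Finite G] [Finite H] {R : Subgroup G} (hR : Closed c R) :
    Col (qcol c R) (qcol d (img c d R)) := by
  have hrep : ∀ (g : G) (q : H ⧸ img c d R), qcol c R g = qcol d (img c d R) q →
      ∃ k : H, (k : H ⧸ img c d R) = q ∧ c g = d k := by
    intro g q e
    obtain ⟨k, hk, e'⟩ : c g ∈ qcol d (img c d R) q := e ▸ qcol_self R g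
    exact ⟨k, hk, e'.symm⟩
  constructor
  · exact h.qcol_congr hR h.one
  · intro q e
    obtain ⟨g, hg, e'⟩ : c 1 ∈ qcol c R q := e ▸ qcol_self R 1
    rw [← hg, h.left_one g e', QuotientGroup.mk_one]
  · intro q e
    obtain ⟨g, hg, e'⟩ : d 1 ∈ qcol d (img c d R) q := e ▸ qcol_self _ 1
    rw [← hg, h.right_one g e', QuotientGroup.mk_one]
  · intro q q' e
    obtain ⟨g, rfl⟩ := QuotientGroup.mk_surjective q
    obtain ⟨k, rfl, e'⟩ := hrep g q' e
    exact h.qcol_congr hR (h.inv _ _ e')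
  · intro q
    obtain ⟨g, rfl⟩ := QuotientGroup.mk_surjective q
    obtain ⟨k, hk⟩ := h.ex_right g
    exact ⟨k, h.qcol_congr hR hk⟩
  · intro q
    obtain ⟨k, rfl⟩ := QuotientGroup.mk_surjective q
    obtain ⟨g, hg⟩ := h.ex_left k
    exact ⟨g, h.qcol_congr hR hg⟩
  · intro q q' e
    obtain ⟨g, rfl⟩ := QuotientGroup.mk_surjective q
    obtain ⟨k, rfl, e'⟩ := hrep g q' e
    obtain ⟨f, hf⟩ := h.bij _ _ e'
    let F : G ⧸ R → Set C × Set C := fun a => (qcol c R a, qcol c R (a⁻¹ * g))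
    let F' : H ⧸ img c d R → Set C × Set C := fun b =>
      (qcol d (img c d R) b, qcol d (img c d R) (b⁻¹ * k))
    have hFF : ∀ a : G, F a = F' (f a) := fun a =>
      Prod.ext (h.qcol_congr hR (hf a).1) (h.qcol_congr hR (hf a).2)
    have hcard : ∀ s, Nat.card {a // F a = s} = Nat.card {b // F' b = s} := by
      intro s
      have h1 := card_mk_preimage (R := R) (fun a => F a = s)
      have h2 := card_mk_preimage (R := img c d R) (fun a => F' a = s)
      have h3 : Nat.card {a : G // F a = s} = Nat.card {b : H // F' b = s} :=
        Nat.card_congr (f.subtypeEquiv fun a => by rw [hFF])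
      rw [h1, h2, ← h.card_img hR] at h3
      exact Nat.eq_of_mul_eq_mul_left Nat.card_pos h3
    have eqv : ∀ s, Nonempty ({a // F a = s} ≃ {b // F' b = s}) := fun s =>
      Finite.card_eq.mp (hcard s)
    refine ⟨Equiv.ofFiberEquiv (f := F) (g := F') fun s => (eqv s).some, fun a => ?_⟩
    have := Equiv.ofFiberEquiv_map (f := F) (g := F') (fun s => (eqv s).some) a
    exact ⟨(congrArg Prod.fst this).symm, (congrArg Prod.snd this).symm⟩

lemma qcol_rad_iff (h : Col c c) [Finite G] {u g : G} :
    qcol c (rad c u) (g : G ⧸ rad c u) = qcol c (rad c u) (u : G ⧸ rad c u) ↔ c g = c u := by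
  constructor
  · intro e
    obtain ⟨g', hg', e'⟩ : c u ∈ qcol c (rad c u) (g : G ⧸ rad c u) := e ▸ qcol_self _ u
    have h1 : g'⁻¹ * g ∈ rad c u := QuotientGroup.eq.mp hg'
    simpa using mul_of_rad h1 e'
  · intro e
    have hi : img c c (rad c u) = rad c u := by
      ext k
      exact h.mem_img_iff (h.rad_closed u) rfl
    have := h.qcol_congr (h.rad_closed u) e
    rwa [hi] at this

lemma rad_quot (h : Col c c) [Finite G] (u : G) :
    rad (qcol c (rad c u)) (u : G ⧸ rad c u) = ⊥ := by
  rw [eq_bot_iff]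
  intro q hq
  obtain ⟨g, rfl⟩ := QuotientGroup.mk_surjective q
  rw [mem_bot, QuotientGroup.eq_one_iff]
  refine mem_rad_of fun z hz => ?_
  rw [← qcol_rad_iff h, QuotientGroup.mk_mul]
  exact (hq _).mpr ((qcol_rad_iff h).mpr hz)

lemma pcyc_quot (hP : PCyc p G) (R : Subgroup G) : PCyc p (G ⧸ R) where
  prime := hP.prime
  finite := by have := hP.finite; infer_instance
  cyclic := by
    have := hP.cyclic
    exact isCyclic_of_surjective (QuotientGroup.mk' R) (QuotientGroup.mk'_surjective R)
  card := by
    obtain ⟨k, hk⟩ := hP.card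
    obtain ⟨i, -, hi⟩ := (Nat.dvd_prime_pow hP.prime).mp (hk ▸ card_quotient_dvd_card R)
    exact ⟨i, hi⟩

end Col
end SchurColor

/-! ### Classes of generators with trivial radical -/

namespace SchurColor
open Subgroup

lemma zpow_congr {K : Type*} [Group K] {N : ℕ} (hK : Nat.card K = N) {a b : ℤ}
    (h : (N : ℤ) ∣ a - b) (g : K) : g ^ a = g ^ b := by
  have h1 : (orderOf g : ℤ) ∣ a - b :=
    (Int.natCast_dvd_natCast.mpr (hK ▸ orderOf_dvd_natCard g)).trans h
  rw [orderOf_dvd_iff_zpow_eq_one, zpow_sub] at h1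
  exact mul_inv_eq_one.mp h1

namespace PCyc
variable {p : ℕ} {G : Type*} [CommGroup G]

lemma lt_order (hP : PCyc p G) {a b : G} (hab : a ∈ zpowers b) (hba : b ∉ zpowers a) :
    orderOf a < orderOf b := by
  have := hP.finite
  refine lt_of_le_of_ne (Nat.le_of_dvd (orderOf_pos b) (orderOf_dvd_of_mem_zpowers hab)) ?_
  exact fun heq => hba (hP.mem_of_order heq.symm.dvd)

lemma exists_inv (hP : PCyc p G) {m : ℤ} (hm : ¬ (p : ℤ) ∣ m) :
    ∃ m' : ℤ, ¬ (p : ℤ) ∣ m' ∧ (Nat.card G : ℤ) ∣ m * m' - 1 := by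
  obtain ⟨k, hk⟩ := hP.card
  have hc : IsCoprime m ((p : ℤ) ^ (k + 1)) :=
    (((Nat.prime_iff_prime_int.mp hP.prime).irreducible.coprime_iff_not_dvd).mpr hm).symm.pow_right
  obtain ⟨a, b, hab⟩ := hc
  refine ⟨a, fun hpa => ?_, -b * p, ?_⟩
  · have : (p : ℤ) ∣ 1 := by
      rw [← hab]
      exact dvd_add (hpa.mul_right _) ((dvd_pow_self _ (Nat.succ_ne_zero k)).mul_left _)
    exact (Nat.prime_iff_prime_int.mp hP.prime).not_isUnit (isUnit_of_dvd_one this)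
  · rw [hk]; push_cast; linear_combination hab

lemma not_dvd_inv_mul {m m' : ℤ} (hP : PCyc p G) (h1 : ¬ (p : ℤ) ∣ m) (h2 : ¬ (p : ℤ) ∣ m') :
    ¬ (p : ℤ) ∣ m * m' := fun h =>
  ((Nat.prime_iff_prime_int.mp hP.prime).dvd_or_dvd h).elim h1 h2

lemma cancel (hP : PCyc p G) {K : Type*} [Group K] (hK : Nat.card K = Nat.card G) {g : K} {a m : ℤ}
    (hm : ¬ (p : ℤ) ∣ m) (h : g ^ (a * m) = 1) : g ^ a = 1 := by
  obtain ⟨m', -, hm'⟩ := hP.exists_inv hm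
  have : g ^ (a * m * m') = g ^ a :=
    zpow_congr hK (by obtain ⟨r, hr⟩ := hm'; exact ⟨a * r, by linear_combination a * hr⟩) g
  rw [← this, zpow_mul, h, one_zpow]

lemma not_mem_zpow (hP : PCyc p G) {x : G} (hx : x ≠ 1) {n : ℤ} (hn : (p : ℤ) ∣ n) :
    x ∉ zpowers (x ^ n) := by
  rintro ⟨m, hm⟩
  simp only [← zpow_mul] at hm
  have h1 : x ^ ((1 : ℤ) * (1 - n * m)) = 1 := by
    rw [one_mul, zpow_sub, hm, zpow_one, mul_inv_cancel]
  have h2 : ¬ (p : ℤ) ∣ 1 - n * m := fun hd =>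
    (Nat.prime_iff_prime_int.mp hP.prime).not_isUnit
      (isUnit_of_dvd_one ((dvd_sub_left (hn.mul_right m)).mp hd))
  exact hx (by simpa using hP.cancel rfl h2 h1)

lemma mem_zpow (hP : PCyc p G) {n : ℤ} (hn : ¬ (p : ℤ) ∣ n) (x : G) : x ∈ zpowers (x ^ n) := by
  obtain ⟨m', -, hm'⟩ := hP.exists_inv hn
  refine ⟨m', ?_⟩
  simp only [← zpow_mul]
  simpa using zpow_congr rfl hm' x

lemma zpow_add_not_dvd (hP : PCyc p G) {n : ℤ} (hn : (p : ℤ) ∣ n) : ¬ (p : ℤ) ∣ 1 + n := by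
  intro hd
  have : (p : ℤ) ∣ 1 := (dvd_add_left hn).mp hd
  exact (Nat.prime_iff_prime_int.mp hP.prime).not_isUnit (isUnit_of_dvd_one this)

end PCyc

namespace Col
variable {p : ℕ} {G H C : Type*} [CommGroup G] [CommGroup H] {c : G → C} {d : H → C}

lemma multz (h : Col c d) (hP : PCyc p G) [Finite H] {m : ℤ} (hm : ¬ (p : ℤ) ∣ m) {g : G} {k : H}
    (e : c g = d k) : c (g ^ m) = d (k ^ m) := by
  have := hP.finite
  obtain ⟨a, ha⟩ := hP.card
  have hp0 : (0 : ℤ) < p := by exact_mod_cast hP.prime.pos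
  obtain ⟨n, hn⟩ : ∃ n : ℕ, (n : ℤ) = m % (p ^ (a + 1) : ℤ) :=
    ⟨_, Int.toNat_of_nonneg (Int.emod_nonneg _ (by positivity))⟩
  have hdvd : (p ^ (a + 1) : ℤ) ∣ m - n := by rw [hn]; exact Int.dvd_self_sub_emod
  have hN : (Nat.card G : ℤ) ∣ m - n := by
    rw [ha]; push_cast
    exact (pow_dvd_pow _ (Nat.le_succ a)).trans hdvd
  have hn' : ¬ p ∣ n := by
    intro hd
    have h1 : (p : ℤ) ∣ m - n := (dvd_pow_self _ (Nat.succ_ne_zero a)).trans hdvd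
    exact hm ((dvd_sub_left (Int.natCast_dvd_natCast.mpr hd)).mp h1)
  rw [zpow_congr rfl hN, zpow_congr h.card_eq.symm hN]
  simpa using h.mult (hP.coprime hn') e

/-- Hypotheses on a class all of whose members generate `⟨u⟩` and whose radical is trivial. -/
structure Free (p : ℕ) (c : G → C) (u : G) : Prop where
  pc : PCyc p G
  ne : u ≠ 1
  gen : ∀ z, c z = c u → u ∈ zpowers z
  mem : ∀ z, c z = c u → z ∈ zpowers u
  rad : rad c u = ⊥

namespace Free
variable {u : G}

lemma repr (hF : Free p c u) {z : G} (hz : c z = c u) : ∃ m : ℤ, ¬ (p : ℤ) ∣ m ∧ u ^ m = z := by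
  obtain ⟨m, hm, h⟩ := hF.pc.exists_coprime (hF.mem z hz) (hF.gen z hz)
  exact ⟨m, by exact_mod_cast hm, by simpa using h⟩

lemma nogen (hF : Free p c u) (h : Col c c) {n j : ℤ} (hn : (p : ℤ) ∣ n) (hj : ¬ (p : ℤ) ∣ j) :
    c (u ^ n) ≠ c (u ^ j) := by
  intro e
  have := hF.pc.finite
  obtain ⟨j', hj', hjj⟩ := hF.pc.exists_inv hj
  have h1 := h.multz hF.pc hj' e
  rw [← zpow_mul, ← zpow_mul, zpow_congr rfl hjj u, zpow_one] at h1
  exact hF.pc.not_mem_zpow hF.ne (hn.mul_right j') (hF.gen _ h1)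

/-- A class of generators of `⟨u⟩` with trivial radical contains no `u ^ (1 + n) ≠ u` with `p ∣ n`
(and `4 ∣ n` when `p = 2`): otherwise the powers of `1 + n`, which are again multipliers of the
class, produce a nontrivial element of order `p` in the radical. -/
lemma lemD (hF : Free p c u) (h : Col c c) : ∀ n : ℤ, (p : ℤ) ∣ n → (p = 2 → (4 : ℤ) ∣ n) →
    c (u ^ (1 + n)) = c u → u ^ n = 1 := by
  have := hF.pc.finite
  have hP := hF.pc
  intro n
  induction hN : orderOf (u ^ n) using Nat.strong_induction_on generalizing n with
  | _ N ih =>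
  subst hN
  intro hn hn4 e
  by_contra hw
  have hpow : ∀ j : ℕ, c (u ^ (1 + n) ^ j) = c u := by
    intro j
    induction j with
    | zero => simp
    | succ j ihj =>
      rw [pow_succ, zpow_mul]
      exact (h.multz hP (hP.zpow_add_not_dvd hn) ihj).trans e
  set S : ℤ := ∑ i ∈ Finset.range p, (1 + n) ^ i with hS
  have hS1 : (1 + n) ^ p = 1 + n * S := by
    have := mul_geom_sum (1 + n) p
    rw [← hS] at this
    linear_combination -this
  obtain ⟨s, hs, hsp⟩ : ∃ s : ℤ, S = p * s ∧ ¬ (p : ℤ) ∣ s := by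
    rcases hP.prime.eq_two_or_odd' with h2 | hodd
    · subst h2
      obtain ⟨r, hr⟩ := hn4 rfl
      refine ⟨1 + 2 * r, ?_, by push_cast; omega⟩
      rw [hS, hr]; simp [Finset.sum_range_succ]; ring
    · obtain ⟨b, rfl⟩ := hn
      have h1 := odd_sq_dvd_geom_sum₂_sub (a := (1 : ℤ)) (b := b) hodd
      simp only [one_pow, mul_one] at h1
      rw [← hS] at h1
      obtain ⟨r, hr⟩ := h1
      exact ⟨1 + p * r, by linear_combination hr, hP.zpow_add_not_dvd (dvd_mul_right _ _)⟩
  have h1 : u ^ (n * S) = 1 := by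
    refine ih _ ?_ (n * S) rfl (hn.mul_right _) (fun h2 => (hn4 h2).mul_right _) ?_
    · rw [zpow_mul]
      exact hP.lt_order (zpow_mem_zpowers _ _) (hP.not_mem_zpow hw ⟨s, hs⟩)
    · rw [← hS1]; exact hpow p
  have hwp : (u ^ n) ^ p = 1 := by
    rw [hs, ← mul_assoc] at h1
    have := hP.cancel rfl hsp h1
    rwa [zpow_mul, zpow_natCast] at this
  have hwn : (u ^ n) ^ n = 1 := by
    obtain ⟨r, hr⟩ := hn
    conv_lhs => rw [hr, zpow_mul]
    rw [← hr, zpow_natCast, hwp, one_zpow]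
  have hwt : ∀ t : ℕ, u ^ (1 + n) ^ t = u * (u ^ n) ^ t := by
    intro t
    induction t with
    | zero => simp
    | succ t iht =>
      have h5 : ((u ^ n) ^ t) ^ n = 1 := by
        rw [← zpow_natCast (u ^ n) t, ← zpow_mul (u ^ n), mul_comm, zpow_mul (u ^ n), hwn, one_zpow]
      rw [pow_succ, zpow_mul, iht, zpow_add, zpow_one, mul_zpow, h5, mul_one, pow_succ, mul_assoc]
  refine hw ?_
  rw [← mem_bot, ← hF.rad]
  refine mem_rad_of fun z hz => ?_
  obtain ⟨m, hm, rfl⟩ := hF.repr hz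
  obtain ⟨m', hm', hmm⟩ := hP.exists_inv hm
  obtain ⟨t, ht⟩ := hP.exists_pow (zpow_mem_zpowers (u ^ n) m')
  have h2 : c (u * (u ^ n) ^ m') = c u := by
    rw [← ht, ← hwt]; exact hpow t
  have h3 := h.multz hP hm h2
  rw [mul_zpow, ← zpow_mul (u ^ n), zpow_congr rfl (by rwa [mul_comm] at hmm) (u ^ n), zpow_one,
    mul_comm] at h3
  exact h3.trans hz

end Free
end Col
end SchurColor

/-! ### Lifting powers: the generic case -/

namespace SchurColor
open Subgroup
namespace Col
variable {p : ℕ} {G H C : Type*} [CommGroup G] [CommGroup H] {c : G → C} {d : H → C}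
namespace Free
variable {u : G}

lemma not_dvd (hF : Free p c u) {a : ℤ} (ha : c (u ^ a) = c u) : ¬ (p : ℤ) ∣ a := fun hd =>
  hF.pc.not_mem_zpow hF.ne hd (hF.gen _ ha)

lemma ne_one (hF : Free p c u) (h : Col c d) {u' : H} (e : c u = d u') : u' ≠ 1 := by
  rintro rfl
  exact hF.ne (h.left_one _ (e.trans h.one.symm))

/-- No two distinct members of the class agree modulo `⟨u ^ p⟩`. -/
def Uniq (p : ℕ) (c : G → C) (u : G) : Prop :=
  ∀ n : ℤ, (p : ℤ) ∣ n → c (u ^ (1 + n)) = c u → u ^ n = 1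

lemma uniq_eq (hF : Free p c u) (h : Col c c) (hU : Uniq p c u) {a b : ℤ} (ha : c (u ^ a) = c u)
    (hb : c (u ^ b) = c u) (hab : (p : ℤ) ∣ a - b) : u ^ a = u ^ b := by
  have := hF.pc.finite
  obtain ⟨b', hb', hbb⟩ := hF.pc.exists_inv (hF.not_dvd hb)
  have h1 := h.multz hF.pc hb' (ha.trans hb.symm)
  rw [← zpow_mul, ← zpow_mul, zpow_congr rfl hbb u, zpow_one] at h1
  have h2 : c (u ^ (1 + (a - b) * b')) = c u := by
    rw [← h1]
    congr 1
    refine zpow_congr rfl ?_ u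
    obtain ⟨r, hr⟩ := hbb
    exact ⟨-r, by linear_combination -hr⟩
  have h3 := hF.pc.cancel rfl hb' (hU _ (hab.mul_right _) h2)
  rw [zpow_sub] at h3
  exact mul_inv_eq_one.mp h3

/-- All elements of `H` with the colour of `u` are powers of `u'`, with the same exponents as the
members of the class of `u`: these powers are distinct and there are enough of them. -/
lemma surj (hF : Free p c u) (h : Col c d) [Finite H] (hU : Uniq p c u) {u' : H} (e : c u = d u')
    {k : H} (hk : c u = d k) : ∃ m : ℕ, m < orderOf u ∧ c (u ^ m) = c u ∧ u' ^ m = k := by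
  have := hF.pc.finite
  have hex : ∀ z : {z // c z = c u}, ∃ m : ℕ, m < orderOf u ∧ u ^ m = z := by
    rintro ⟨z, hz⟩
    obtain ⟨m, hm⟩ := hF.pc.exists_pow (hF.mem z hz)
    exact ⟨m % orderOf u, Nat.mod_lt _ (orderOf_pos u), by rw [pow_mod_orderOf, hm]⟩
  choose m hm1 hm2 using hex
  have hcm : ∀ z, c (u ^ m z) = c u := fun z => by rw [hm2]; exact z.2
  have hcz : ∀ z, c (u ^ (m z : ℤ)) = c u := fun z => by rw [zpow_natCast]; exact hcm z
  let F : {z // c z = c u} → {k // d k = c u} := fun z => ⟨u' ^ m z, by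
    have := h.multz hF.pc (hF.not_dvd (hcz z)) e
    rw [zpow_natCast, zpow_natCast] at this
    rw [← this, hcm]⟩
  have hinj : Function.Injective F := by
    intro a b hab
    have hab' : u' ^ m a = u' ^ m b := congrArg Subtype.val hab
    have h1 : u' ^ ((1 : ℤ) * (m a - m b)) = 1 := by
      rw [one_mul, zpow_sub, zpow_natCast, zpow_natCast, hab', mul_inv_cancel]
    have h2 : (p : ℤ) ∣ m a - m b := by
      by_contra hnd
      exact hF.ne_one h e (by simpa using hF.pc.cancel h.card_eq.symm hnd h1)
    have := hF.uniq_eq h.refl hU (hcz a) (hcz b) h2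
    rw [zpow_natCast, zpow_natCast, hm2, hm2] at this
    exact Subtype.ext this
  have hbij : Function.Bijective F :=
    (Nat.bijective_iff_injective_and_card F).mpr ⟨hinj, h.card_pred (· = c u)⟩
  obtain ⟨z, hz⟩ := hbij.2 ⟨k, hk.symm⟩
  exact ⟨m z, hm1 z, hcm z, congrArg Subtype.val hz⟩

/-- The class of `u ^ n`, `p ∣ n`, is stable under the multipliers of the class of `u`. Compare the
factorizations of `u ^ (1 + n)` and of `u ^ (κ * (1 + n))` as a member of the class of `u ^ n` times
a member of the class of `u`. -/
lemma stable (hF : Free p c u) (h : Col c c) (hU : Uniq p c u) {n κ : ℤ} (hn : (p : ℤ) ∣ n)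
    (hκ : c (u ^ κ) = c u) : c (u ^ (n * κ)) = c (u ^ n) := by
  have := hF.pc.finite
  have h1 : c (u ^ n * u) = c (u ^ (κ * (1 + n))) := by
    have := h.multz hF.pc (hF.pc.zpow_add_not_dvd hn) hκ
    rw [← zpow_mul, zpow_add u, zpow_one] at this
    rw [this, mul_comm]
  obtain ⟨a, b, hab, ha, hb⟩ := h.transfer h1
  obtain ⟨m, hm, rfl⟩ := hF.repr hb.symm
  have ha' : a = u ^ (κ * (1 + n) - m) := by rw [zpow_sub, ← hab]; simp
  subst ha'
  have hd : (p : ℤ) ∣ κ - m := by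
    by_contra hnd
    refine hF.nogen h hn (fun hd => hnd ?_) ha
    have : κ - m = (κ * (1 + n) - m) - n * κ := by ring
    rw [this]
    exact dvd_sub hd (hn.mul_right _)
  have h2 := hF.uniq_eq h hU hκ hb.symm hd
  rw [ha]
  congr 1
  have : κ * (1 + n) - m = n * κ + (κ - m) := by ring
  rw [this, zpow_add, zpow_sub, h2, mul_inv_cancel, mul_one]

/-- For `p ∣ n` write `u ^ n = u ^ (1 + n) * u⁻¹`. Both factors are generators of `⟨u⟩`, so the
colours of their images are known; transferring the factorization determines the image of the
class of `u ^ n`. -/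
theorem lift_uniq (hF : Free p c u) (h : Col c d) [Finite H] (hU : Uniq p c u) {u' : H}
    (e : c u = d u') (n : ℤ) : c (u ^ n) = d (u' ^ n) := by
  by_cases hn : (p : ℤ) ∣ n
  swap
  · exact h.multz hF.pc hn e
  have := hF.pc.finite
  obtain ⟨k, hk⟩ := h.ex_right (u ^ n)
  have h1 : c (u ^ (1 + n) * u⁻¹) = d k := by
    rw [← hk, zpow_add, zpow_one, mul_comm, inv_mul_cancel_left]
  obtain ⟨a, b, hab, ha, hb⟩ := h.transfer h1
  obtain ⟨κ₂, hlt₂, hκ₂, hb'⟩ := hF.surj h hU e (k := b⁻¹) (by simpa using h.inv _ _ hb)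
  have hnd := hF.pc.zpow_add_not_dvd hn
  obtain ⟨r, hr, hrr⟩ := hF.pc.exists_inv hnd
  have h2 := h.multz hF.pc hr ha
  rw [← zpow_mul, zpow_congr rfl hrr, zpow_one] at h2
  obtain ⟨κ₁, hlt₁, hκ₁, ha'⟩ := hF.surj h hU e h2
  rw [← zpow_natCast] at hκ₁ hκ₂ ha' hb'
  have ha2 : a = u' ^ ((κ₁ : ℤ) * (1 + n)) := by
    rw [zpow_mul, ha', ← zpow_mul, mul_comm, zpow_congr h.card_eq.symm hrr, zpow_one]
  have hb2 : b = u' ^ (-(κ₂ : ℤ)) := by rw [zpow_neg, hb', inv_inv]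
  have hkk : k = u' ^ ((κ₁ : ℤ) * (1 + n) - κ₂) := by
    rw [← hab, ha2, hb2, ← zpow_add, sub_eq_add_neg]
  have hd : (p : ℤ) ∣ κ₁ - κ₂ := by
    by_contra hnd'
    have hj : ¬ (p : ℤ) ∣ (κ₁ : ℤ) * (1 + n) - κ₂ := by
      intro hd
      refine hnd' ?_
      have : (κ₁ : ℤ) - κ₂ = ((κ₁ : ℤ) * (1 + n) - κ₂) - n * κ₁ := by ring
      rw [this]
      exact dvd_sub hd (hn.mul_right _)
    refine hF.nogen h.refl hn hj ?_
    rw [hk, hkk, h.multz hF.pc hj e]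
  have h3 := hF.uniq_eq h.refl hU hκ₁ hκ₂ hd
  rw [zpow_natCast, zpow_natCast] at h3
  have h4 : κ₁ = κ₂ := pow_injOn_Iio_orderOf hlt₁ hlt₂ h3
  subst h4
  have hk2 : k = u' ^ (n * κ₁) := by rw [hkk]; congr 1; ring
  obtain ⟨s, hs, hss⟩ := hF.pc.exists_inv (hF.not_dvd hκ₁)
  have h5 := h.multz hF.pc hs ((hF.stable h.refl hU hn hκ₁).trans (hk.trans (congrArg d hk2)))
  have h6 : (Nat.card G : ℤ) ∣ n * κ₁ * s - n := by
    obtain ⟨t, ht⟩ := hss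
    exact ⟨n * t, by linear_combination n * ht⟩
  rwa [← zpow_mul, ← zpow_mul, zpow_congr rfl h6, zpow_congr h.card_eq.symm h6] at h5

end Free
end Col
end SchurColor

/-! ### Lifting powers: the exceptional case for p = 2 -/

namespace SchurColor
open Subgroup
namespace Col
variable {p : ℕ} {G H C : Type*} [CommGroup G] [CommGroup H] {c : G → C} {d : H → C}
namespace Free
variable {u : G}

/-- The class of `u` in the exceptional case `p = 2`: it is `{u, u ^ ε}` with `ε ≡ 3 mod 4`. -/
structure Exc (c : G → C) (u : G) (ε : ℤ) : Prop where
  mod : ∃ r, ε = 3 + 4 * r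
  col : c (u ^ ε) = c u
  two : ∀ z, c z = c u → z = u ∨ z = u ^ ε
  four : u ^ (4 : ℤ) ≠ 1
  sq : u ^ (2 * (1 + ε)) = 1

lemma odd_cancel (hF : Free 2 c u) {K : Type*} [Group K] (hK : Nat.card K = Nat.card G) {g : K}
    {a m : ℤ} (hm : m % 2 = 1) (h : g ^ (a * m) = 1) : g ^ a = 1 :=
  hF.pc.cancel hK (by push_cast; omega) h

lemma exists_exc (hF : Free 2 c u) (h : Col c c) (hU : ¬ Uniq 2 c u) : ∃ ε, Exc c u ε := by
  have := hF.pc.finite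
  have hD := hF.lemD h
  unfold Uniq at hU
  push Not at hU
  obtain ⟨n, hn, e, hne⟩ := hU
  have h4 : ¬ (4 : ℤ) ∣ n := fun h4 => hne (hD n hn (fun _ => h4) e)
  have hD4 : ∀ m : ℤ, m % 4 = 1 → c (u ^ m) = c u → u ^ m = u := by
    intro m hm hc
    have h1 := hD (m - 1) (by push_cast; omega) (fun _ => by omega) (by rwa [add_sub_cancel])
    rwa [zpow_sub, zpow_one, mul_inv_eq_one] at h1
  obtain ⟨r, hr⟩ : ∃ r, 1 + n = 3 + 4 * r := ⟨(n - 2) / 4, by push_cast at hn; omega⟩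
  rw [hr] at e
  set ε := 3 + 4 * r with hε
  have hnd : ¬ ((2 : ℕ) : ℤ) ∣ ε := hF.not_dvd e
  have hε4 : ε % 4 = 3 := by omega
  have htwo : ∀ z, c z = c u → z = u ∨ z = u ^ ε := by
    intro z hz
    obtain ⟨m, hm, rfl⟩ := hF.repr hz
    push_cast at hm
    rcases (show m % 4 = 1 ∨ m % 4 = 3 by omega) with h1 | h3
    · exact Or.inl (hD4 m h1 hz)
    · right
      have h1 := h.multz hF.pc hnd (hz.trans e.symm)
      rw [← zpow_mul, ← zpow_mul] at h1
      have h2 : u ^ (ε * ε) = u := hD4 _ (by rw [Int.mul_emod, hε4]; norm_num) (by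
        have := h.multz hF.pc hnd e
        rw [← zpow_mul] at this
        rw [this, e])
      rw [h2] at h1
      have h3 := hD4 _ (by rw [Int.mul_emod, h3, hε4]; norm_num) h1
      have h4 : (u ^ ε) ^ m = (u ^ ε) ^ ε := by rw [← zpow_mul, ← zpow_mul, h2, mul_comm, h3]
      have h5 : u ^ ((m - ε) * ε) = 1 := by
        rw [mul_comm, zpow_mul, zpow_sub, h4, mul_inv_cancel]
      have h6 := hF.odd_cancel rfl (by omega) h5
      rwa [zpow_sub, mul_inv_eq_one] at h6
  have h2 : u ^ (ε * ε) = u := hD4 _ (by rw [Int.mul_emod, hε4]; norm_num) (by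
    have := h.multz hF.pc hnd e
    rw [← zpow_mul] at this
    rw [this, e])
  refine ⟨ε, ⟨r, rfl⟩, e, htwo, fun h4' => ?_, ?_⟩
  · have h3 : u ^ ε = u * u ^ (2 : ℤ) := by
      rw [hε, zpow_add, zpow_mul, h4', one_zpow, mul_one]; group
    have h5 : u ^ (2 : ℤ) ∈ SchurColor.rad c u := by
      refine mem_rad_of fun z hz => ?_
      rcases htwo z hz with rfl | rfl
      · rw [mul_comm, ← h3, e]
      · rw [h3]
        have : u ^ (2 : ℤ) * (u * u ^ (2 : ℤ)) = u * u ^ (4 : ℤ) := by group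
        rw [this, h4', mul_one]
    rw [hF.rad, mem_bot] at h5
    obtain ⟨m, rfl⟩ := hn
    exact hne (by push_cast; rw [zpow_mul, h5, one_zpow])
  · refine hF.odd_cancel rfl (m := 1 + 2 * r) (by omega) ?_
    have : 2 * (1 + ε) * (1 + 2 * r) = ε * ε - 1 := by rw [hε]; ring
    rw [this, zpow_sub, h2, zpow_one, mul_inv_cancel]

lemma exc_ne {ε : ℤ} (hE : Exc c u ε) : u ^ (2 : ℤ) ≠ 1 := fun h2 =>
  hE.four (by rw [show (4 : ℤ) = 2 * 2 by norm_num, zpow_mul, h2, one_zpow])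

lemma exc_sub_ne (hF : Free 2 c u) {ε : ℤ} (hE : Exc c u ε) {m : ℤ} (hm : m % 2 = 1) :
    u ^ (m * (ε - 1)) ≠ 1 := by
  intro h1
  obtain ⟨r, rfl⟩ := hE.mod
  have : m * (3 + 4 * r - 1) = 2 * (m * (1 + 2 * r)) := by ring
  rw [this] at h1
  exact exc_ne hE (hF.odd_cancel rfl (by rw [Int.mul_emod, hm]; omega) h1)

lemma exc_sub_ne' (hF : Free 2 c u) {ε : ℤ} (hE : Exc c u ε) : u ^ (2 * ε - 2) ≠ 1 := by
  intro h1
  obtain ⟨r, rfl⟩ := hE.mod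
  have : 2 * (3 + 4 * r) - 2 = 4 * (1 + 2 * r) := by ring
  rw [this] at h1
  exact hE.four (hF.odd_cancel rfl (by omega) h1)

/-- `u ^ 2` is a product of two members of the class in exactly one way. -/
lemma exc_one (hF : Free 2 c u) {ε : ℤ} (hE : Exc c u ε) {a : G} (ha : c a = c u)
    (hb : c (a⁻¹ * u ^ (2 : ℤ)) = c u) : a = u := by
  rcases hE.two a ha with rfl | rfl
  · rfl
  exfalso
  have hne := hF.exc_sub_ne hE (m := 1) (by norm_num)
  rw [one_mul] at hne
  rw [← zpow_neg, ← zpow_add] at hb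
  rcases hE.two _ hb with h1 | h1
  · refine hne ?_
    have : ε - 1 = 1 - (-ε + 2) := by ring
    rw [this, zpow_sub, h1, zpow_one, mul_inv_cancel]
  · refine hF.exc_sub_ne' hE ?_
    have : 2 * ε - 2 = ε - (-ε + 2) := by ring
    rw [this, zpow_sub, ← h1, mul_inv_cancel]

/-- Consequently no product of two distinct elements with the colour of `u` has the colour
of `u ^ 2`. -/
lemma exc_not (hF : Free 2 c u) (h : Col c d) {ε : ℤ} (hE : Exc c u ε) {k₁ k₂ : H}
    (h1 : c u = d k₁) (h2 : c u = d k₂) (hne : k₁ ≠ k₂) : c (u ^ (2 : ℤ)) ≠ d (k₁ * k₂) := by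
  intro e
  obtain ⟨f, hf⟩ := h.bij _ _ e
  have key : ∀ k k', c u = d k → c u = d k' → k⁻¹ * (k₁ * k₂) = k' → f.symm k = u := by
    intro k k' hk hk' hkk
    have := hf (f.symm k)
    rw [Equiv.apply_symm_apply, hkk, ← hk, ← hk'] at this
    exact hF.exc_one hE this.1 this.2
  refine hne (f.symm.injective ((key k₁ k₂ h1 h2 (by simp)).trans
    (key k₂ k₁ h2 h1 (by rw [mul_comm k₁, inv_mul_cancel_left])).symm))

/-- The elements of `H` with the colour of `u` are `u'` and `u' ^ ε`, as in `G`. -/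
lemma exc_image (hF : Free 2 c u) (h : Col c d) [Finite H] {ε : ℤ} (hE : Exc c u ε) {u' : H}
    (e : c u = d u') : (∀ k, c u = d k → k = u' ∨ k = u' ^ ε) ∧ u' ≠ u' ^ ε ∧
      u' ^ (2 * (1 + ε)) = 1 := by
  have := hF.pc.finite
  have hnd : ¬ ((2 : ℕ) : ℤ) ∣ ε := hF.not_dvd hE.col
  have hmult : ∀ k, c u = d k → c u = d (k ^ ε) := fun k hk =>
    hE.col.symm.trans (h.multz hF.pc hnd hk)
  have huε : u ≠ u ^ ε := by
    intro h1
    refine hF.exc_sub_ne hE (m := 1) (by norm_num) ?_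
    rw [one_mul, zpow_sub, ← h1, zpow_one, mul_inv_cancel]
  have hcard : Nat.card {k // d k = c u} = 2 := by
    rw [← h.card_pred (· = c u), Nat.card_eq_two_iff]
    refine ⟨⟨u, rfl⟩, ⟨u ^ ε, hE.col⟩, fun h1 => huε (congrArg Subtype.val h1), ?_⟩
    ext ⟨z, hz⟩
    simpa using hE.two z hz
  obtain ⟨⟨k₁, hk₁⟩, ⟨k₂, hk₂⟩, hne, hun⟩ := Nat.card_eq_two_iff.mp hcard
  have hall : ∀ k, c u = d k → k = k₁ ∨ k = k₂ := by
    intro k hk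
    have : (⟨k, hk.symm⟩ : {k // d k = c u}) ∈ ({⟨k₁, hk₁⟩, ⟨k₂, hk₂⟩} : Set _) := by
      rw [hun]; trivial
    simpa using this
  have hne' : k₁ ≠ k₂ := fun h1 => hne (Subtype.ext h1)
  obtain ⟨b, hb, hbne, hall'⟩ : ∃ b, c u = d b ∧ u' ≠ b ∧ ∀ k, c u = d k → k = u' ∨ k = b := by
    rcases hall u' e with rfl | rfl
    · exact ⟨k₂, hk₂.symm, hne', hall⟩
    · exact ⟨k₁, hk₁.symm, hne'.symm, fun k hk => (hall k hk).symm⟩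
  have hsq : ∀ k, k = k ^ ε → k ^ (2 : ℤ) = (1 : H) := by
    intro k hk
    obtain ⟨r, hr⟩ := hE.mod
    refine hF.odd_cancel h.card_eq.symm (m := 1 + 2 * r) (by omega) ?_
    have : 2 * (1 + 2 * r) = ε - 1 := by rw [hr]; ring
    rw [this, zpow_sub, ← hk, zpow_one, mul_inv_cancel]
  have hu' : u' ≠ u' ^ ε := by
    intro h1
    have h2 := hsq _ h1
    have hb2 : b ^ (2 : ℤ) = 1 := by
      rcases hall' _ (hmult b hb) with h3 | h3
      · exfalso
        have h4 : (u' * b⁻¹) ^ (1 * ε) = 1 := by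
          rw [one_mul, mul_zpow, inv_zpow, h3, ← h1, mul_inv_cancel]
        have h5 := hF.pc.cancel h.card_eq.symm hnd h4
        rw [zpow_one, mul_inv_eq_one] at h5
        exact hbne h5
      · exact hsq b h3.symm
    obtain ⟨k, hk⟩ := h.ex_right (u ^ (2 : ℤ))
    obtain ⟨x, y, rfl, hx, hy⟩ := h.transfer (a := u) (b := u) (k := k)
      (by rw [← hk, zpow_two])
    have hone : c (u ^ (2 : ℤ)) ≠ d 1 := fun h5 =>
      exc_ne hE (h.left_one _ (h5.trans h.one.symm))
    rw [zpow_two] at h2 hb2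
    rcases hall' x hx with rfl | rfl <;> rcases hall' y hy with rfl | rfl
    · exact hone (h2 ▸ hk)
    · exact hF.exc_not h hE hx hy hbne hk
    · exact hF.exc_not h hE hx hy hbne.symm hk
    · exact hone (hb2 ▸ hk)
  have hbb : b = u' ^ ε := ((hall' _ (hmult u' e)).resolve_left hu'.symm).symm
  subst hbb
  refine ⟨hall', hu', ?_⟩
  have h3 : (u' ^ ε) ^ ε = u' := by
    refine (hall' _ (hmult _ hb)).resolve_right fun h1 => ?_
    have h4 : u' ^ ((ε - 1) * ε) = 1 := by
      rw [sub_mul, one_mul, zpow_sub, zpow_mul, h1, mul_inv_cancel]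
    have h5 := hF.pc.cancel h.card_eq.symm hnd h4
    rw [zpow_sub, zpow_one, mul_inv_eq_one] at h5
    exact hu' h5.symm
  obtain ⟨r, hr⟩ := hE.mod
  refine hF.odd_cancel h.card_eq.symm (m := 1 + 2 * r) (by omega) ?_
  have : 2 * (1 + ε) * (1 + 2 * r) = ε * ε - 1 := by rw [hr]; ring
  rw [this, zpow_sub, zpow_mul, h3, zpow_one, mul_inv_cancel]

/-- For even `n` in the exceptional case: `u ^ n` and `u ^ (-n)` make up a colour class, and the
corresponding class in `H` consists of `u' ^ n` and `u' ^ (-n)`. -/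
structure Ev (c : G → C) (d : H → C) (u : G) (u' : H) (n : ℤ) : Prop where
  left : ∀ z, c z = c (u ^ n) → z = u ^ n ∨ z = u ^ (-n)
  right : ∀ k, c (u ^ n) = d k → k = u' ^ n ∨ k = u' ^ (-n)
  neg : c (u ^ (-n)) = c (u ^ n)

lemma Ev.lift (h : Col c d) {u' : H} {n : ℤ} (hE : Ev c d u u' n) : c (u ^ n) = d (u' ^ n) := by
  obtain ⟨k, hk⟩ := h.ex_right (u ^ n)
  rcases hE.right k hk with rfl | rfl
  · exact hk
  · have := h.inv _ _ hk
    rw [← zpow_neg, ← zpow_neg, neg_neg, hE.neg] at this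
    exact this

/-- A step shared by the base case and the induction step: `u ^ n` and `u ^ (-n)` have the same
colour. -/
lemma exc_neg (hF : Free 2 c u) (h : Col c c) {ε : ℤ} (hE : Exc c u ε) {n : ℤ} (hn : n % 2 = 0)
    (hl : ∀ z, c z = c (u ^ n) → z = u ^ n ∨ z = u ^ (-n)) : c (u ^ (-n)) = c (u ^ n) := by
  have := hF.pc.finite
  have h1 : c (u ^ n * u) = c (u ^ (ε * (1 + n))) := by
    have := h.multz hF.pc (m := 1 + n) (by push_cast; omega) hE.col
    rw [← zpow_mul, zpow_add u, zpow_one] at this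
    rw [this, mul_comm]
  obtain ⟨a, b, hab, ha, hb⟩ := h.transfer h1
  rcases hl a ha.symm with rfl | rfl
  · rcases hE.two b hb.symm with rfl | rfl
    · exfalso
      refine hF.exc_sub_ne hE (m := 1 + n) (by omega) ?_
      have : (1 + n) * (ε - 1) = ε * (1 + n) - (n + 1) := by ring
      rw [this, zpow_sub, ← hab, zpow_add _ n, zpow_one, mul_inv_cancel]
    · obtain ⟨r, hr⟩ := hE.mod
      have h2 : u ^ (n * 2 * (1 + 2 * r)) = 1 := by
        have : n * 2 * (1 + 2 * r) = ε * (1 + n) - (n + ε) := by rw [hr]; ring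
        rw [this, zpow_sub, ← hab, zpow_add _ n, mul_inv_cancel]
      have h3 := hF.odd_cancel rfl (by omega) h2
      have h4 : u ^ (-n) = u ^ n := by
        have : -n = n - n * 2 := by ring
        rw [this, zpow_sub, h3, inv_one, mul_one]
      rw [h4]
  · exact ha.symm

lemma ev_two (hF : Free 2 c u) (h : Col c d) [Finite H] {ε : ℤ} (hE : Exc c u ε) {u' : H}
    (e : c u = d u') : Ev c d u u' 2 := by
  have := hF.pc.finite
  obtain ⟨h1, h2, h3⟩ := hF.exc_image h hE e
  have huε : u ≠ u ^ ε := (hF.exc_image h.refl hE rfl).2.1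
  have hmul : ∀ {K : Type _} [CommGroup K] (g : K), g ^ (2 * (1 + ε)) = 1 →
      g ^ ε * g ^ ε = g ^ (-2 : ℤ) := by
    intro K _ g hg
    have : -2 = ε + ε - 2 * (1 + ε) := by ring
    rw [this, zpow_sub, hg, inv_one, mul_one, zpow_add]
  have hmul' : u' ^ ε * u' ^ ε = u' ^ (-2 : ℤ) := by
    have : -2 = ε + ε - 2 * (1 + ε) := by ring
    rw [this, zpow_sub, h3, inv_one, mul_one, zpow_add]
  have hl : ∀ z, c z = c (u ^ (2 : ℤ)) → z = u ^ (2 : ℤ) ∨ z = u ^ (-2 : ℤ) := by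
    intro z hz
    obtain ⟨a, b, rfl, ha, hb⟩ := h.refl.transfer (a := u) (b := u) (k := z)
      (by rw [hz, zpow_two])
    rcases hE.two a ha.symm with rfl | rfl <;> rcases hE.two b hb.symm with rfl | rfl
    · exact Or.inl (zpow_two _).symm
    · exact absurd hz.symm (hF.exc_not h.refl hE ha hb huε)
    · exact absurd hz.symm (hF.exc_not h.refl hE ha hb huε.symm)
    · exact Or.inr (hmul u hE.sq)
  refine ⟨hl, fun k hk => ?_, hF.exc_neg h.refl hE (by norm_num) hl⟩
  obtain ⟨a, b, rfl, ha, hb⟩ := h.transfer (a := u) (b := u) (k := k) (by rw [← hk, zpow_two])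
  rcases h1 a ha with rfl | rfl <;> rcases h1 b hb with rfl | rfl
  · exact Or.inl (zpow_two _).symm
  · exact absurd hk (hF.exc_not h hE ha hb h2)
  · exact absurd hk (hF.exc_not h hE ha hb h2.symm)
  · exact Or.inr hmul'

/-- From `n` to `2 * n` for even `n`: the class of `u ^ n` is `{u ^ n, u ^ (-n)}`, so that of
`u ^ (2 * n)` consists of products of two of these. -/
lemma ev_double (hF : Free 2 c u) (h : Col c d) [Finite H] {ε : ℤ} (hE : Exc c u ε) {u' : H}
    {n : ℤ} (hn : n % 2 = 0) (hv : Ev c d u u' n) : Ev c d u u' (n * 2) := by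
  have := hF.pc.finite
  have e2 : ∀ {K : Type _} [CommGroup K] (g : K), g ^ (n * 2) = g ^ n * g ^ n := fun g => by
    rw [zpow_mul, zpow_two]
  have e2' : u' ^ (n * 2) = u' ^ n * u' ^ n := by rw [zpow_mul, zpow_two]
  have hl0 : ∀ a b, c (u ^ n) = c a → c (u ^ n) = c b →
      a * b = u ^ (n * 2) ∨ a * b = u ^ (-(n * 2)) ∨ a * b = 1 := by
    intro a b ha hb
    rcases hv.left a ha.symm with rfl | rfl <;> rcases hv.left b hb.symm with rfl | rfl
    · exact Or.inl (e2 u).symm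
    · right; right; rw [← zpow_add, add_neg_cancel, zpow_zero]
    · right; right; rw [← zpow_add, neg_add_cancel, zpow_zero]
    · right; left; rw [← zpow_add]; congr 1; ring
  have hl : ∀ z, c z = c (u ^ (n * 2)) → z = u ^ (n * 2) ∨ z = u ^ (-(n * 2)) := by
    intro z hz
    obtain ⟨a, b, rfl, ha, hb⟩ := h.refl.transfer (k := z) (by rw [hz, e2 u])
    rcases hl0 a b ha hb with h1 | h1 | h1
    · exact Or.inl h1
    · exact Or.inr h1
    · rw [h1] at hz ⊢
      exact Or.inl (h.left_one _ hz.symm).symm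
  refine ⟨hl, fun k hk => ?_, hF.exc_neg h.refl hE (by omega) hl⟩
  obtain ⟨a, b, rfl, ha, hb⟩ := h.transfer (k := k) (by rw [← hk, e2 u])
  have hone : a * b = 1 → u' ^ (n * 2) = 1 := by
    intro hab
    have h1 : u ^ (n * 2) = 1 := h.left_one _ (by rw [hk, hab, h.one])
    obtain ⟨g, hg⟩ := h.ex_left (u' ^ n * u' ^ n)
    obtain ⟨x, y, rfl, hx, hy⟩ := h.symm.transfer hg.symm
    have hlift := hv.lift h
    have h2 : x * y = 1 := by
      rcases hl0 x y (hlift.trans hx) (hlift.trans hy) with h3 | h3 | h3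
      · rw [h3, h1]
      · rw [h3, zpow_neg, h1, inv_one]
      · exact h3
    rw [e2']
    exact h.right_one _ (by rw [← hg, h2, h.one])
  rcases hv.right a ha with rfl | rfl <;> rcases hv.right b hb with rfl | rfl
  · exact Or.inl e2'.symm
  · have h1 : u' ^ n * u' ^ (-n) = 1 := by rw [← zpow_add, add_neg_cancel, zpow_zero]
    rw [hone h1, h1]; exact Or.inl rfl
  · have h1 : u' ^ (-n) * u' ^ n = 1 := by rw [← zpow_add, neg_add_cancel, zpow_zero]
    rw [hone h1, h1]; exact Or.inl rfl
  · right; rw [← zpow_add]; congr 1; ring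

theorem lift_exc (hF : Free 2 c u) (h : Col c d) [Finite H] {ε : ℤ} (hE : Exc c u ε) {u' : H}
    (e : c u = d u') (n : ℕ) : c (u ^ n) = d (u' ^ n) := by
  have := hF.pc.finite
  have hev : ∀ i : ℕ, Ev c d u u' (2 ^ (i + 1)) := by
    intro i
    induction i with
    | zero => simpa using hF.ev_two h hE e
    | succ i ih =>
      rw [pow_succ]
      exact hF.ev_double h hE (by rw [pow_succ]; omega) ih
  rcases Nat.eq_zero_or_pos n with rfl | hpos
  · simpa using h.one
  obtain ⟨i, m, hm, rfl⟩ := Nat.exists_eq_two_pow_mul_odd hpos.ne'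
  have hm' : ¬ ((2 : ℕ) : ℤ) ∣ m := by
    obtain ⟨j, rfl⟩ := hm
    push_cast; omega
  have key : c (u ^ 2 ^ i) = d (u' ^ 2 ^ i) := by
    rcases i with _ | i
    · simpa using e
    · have := (hev i).lift h
      exact_mod_cast this
  have := h.multz hF.pc hm' key
  rw [zpow_natCast, zpow_natCast] at this
  rwa [pow_mul, pow_mul]

end Free
end Col
end SchurColor

/-! ### Lifting modulo a closed subgroup and gluing -/

namespace SchurColor
open Subgroup

/-- `u ↦ u'` extends to a colour-preserving correspondence `u ^ n ↦ u' ^ n` modulo the subgroup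
corresponding to `L`. -/
def Good {G H C : Type*} [CommGroup G] [CommGroup H] (c : G → C) (d : H → C) (L : Subgroup G)
    (u : G) (u' : H) : Prop :=
  ∀ n : ℤ, ∃ k, c (u ^ n) = d k ∧ k⁻¹ * u' ^ n ∈ img c d L

/-- There is a map on `⟨u⟩` which preserves the colours of quotients and which induces
`u ^ n ↦ u' ^ n` modulo the subgroup corresponding to `L`. -/
def Lifts {G H C : Type*} [CommGroup G] [CommGroup H] (c : G → C) (d : H → C) (L : Subgroup G)
    (u : G) (u' : H) : Prop :=
  ∃ f : G → H, (∀ a ∈ zpowers u, ∀ b ∈ zpowers u, c (a * b⁻¹) = d (f a * (f b)⁻¹)) ∧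
    ∀ n : ℤ, (f (u ^ n))⁻¹ * u' ^ n ∈ img c d L

lemma PCyc.le_total {p : ℕ} {G : Type*} [CommGroup G] (hP : PCyc p G) (L M : Subgroup G) :
    L ≤ M ∨ M ≤ L := by
  by_contra! hcon
  obtain ⟨l, hl, hl'⟩ := SetLike.not_le_iff_exists.mp hcon.1
  obtain ⟨m, hm, hm'⟩ := SetLike.not_le_iff_exists.mp hcon.2
  rcases hP.chain l m with h | h
  · exact hl' ((zpowers_le.mpr hm) h)
  · exact hm' ((zpowers_le.mpr hl) h)

namespace Col
variable {p : ℕ} {G H C : Type*} [CommGroup G] [CommGroup H] {c : G → C} {d : H → C}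

/-- A class of generators of `⟨u⟩` with trivial radical: any `u'` of the same colour as `u` gives a
colour-preserving homomorphism `u ^ n ↦ u' ^ n`. -/
theorem Free.lift {u : G} (hF : Free p c u) (h : Col c d) [Finite H] {u' : H} (e : c u = d u')
    (n : ℤ) : c (u ^ n) = d (u' ^ n) := by
  by_cases hU : Uniq p c u
  · exact hF.lift_uniq h hU e n
  have hp2 : p = 2 := by
    by_contra hp2
    exact hU fun n hn hc => hF.lemD h.refl n hn (fun h2 => absurd h2 hp2) hc
  subst hp2
  obtain ⟨ε, hE⟩ := hF.exists_exc h.refl hU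
  obtain ⟨m, rfl | rfl⟩ := n.eq_nat_or_neg
  · simpa using hF.lift_exc h hE e m
  · simpa using h.inv _ _ (hF.lift_exc h hE e m)

/-- Passing to the quotient by the radical reduces a class of generators of `⟨u⟩` to the case of
trivial radical. -/
theorem good_rad (hP : PCyc p G) (h : Col c d) [Finite H] {u : G} (hu : u ≠ 1)
    (gen : ∀ z, c z = c u → u ∈ zpowers z) (mem : ∀ z, c z = c u → z ∈ zpowers u) {u' : H}
    (e : c u = d u') : Good c d (rad c u) u u' := by
  have := hP.finite
  have hR := h.refl.rad_closed u
  have hmap : ∀ a b : G, a ∈ zpowers b → (a : G ⧸ rad c u) ∈ zpowers (b : G ⧸ rad c u) := by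
    rintro _ b ⟨n, rfl⟩
    exact ⟨n, rfl⟩
  have hF : Free p (qcol c (rad c u)) (u : G ⧸ rad c u) := by
    refine ⟨pcyc_quot hP _, ?_, ?_, ?_, h.refl.rad_quot u⟩
    · rw [Ne, QuotientGroup.eq_one_iff]
      exact h.not_mem_rad hu rfl
    · intro q hq
      obtain ⟨g, rfl⟩ := QuotientGroup.mk_surjective q
      exact hmap _ _ (gen g (h.refl.qcol_rad_iff.mp hq))
    · intro q hq
      obtain ⟨g, rfl⟩ := QuotientGroup.mk_surjective q
      exact hmap _ _ (mem g (h.refl.qcol_rad_iff.mp hq))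
  intro n
  have h1 := hF.lift (h.quot hR) (u' := (u' : H ⧸ img c d (rad c u))) (h.qcol_congr hR e) n
  have h2 : c (u ^ n) ∈ qcol d (img c d (rad c u)) ((u' : H ⧸ img c d (rad c u)) ^ n) := by
    rw [← h1]
    exact qcol_self _ (u ^ n)
  obtain ⟨k, hk, hk'⟩ := h2
  exact ⟨k, hk'.symm, QuotientGroup.eq.mp hk⟩

/-- Gluing: a lift on a closed subgroup `⟨u ^ s⟩` extends to `⟨u⟩` when the classes in the
difference are unions of cosets of `L`. -/
lemma glue (h : Col c d) {u : G} {u' : H} {L : Subgroup G} {s : ℤ}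
    (hu : Closed c (zpowers u)) (hL : Closed c L) (hM : Closed c (zpowers (u ^ s)))
    (hinv : ∀ g ∈ zpowers u, g ∉ zpowers (u ^ s) → ∀ l ∈ L, c (g * l) = c g)
    (hg : Good c d L u u') (hlift : Lifts c d L (u ^ s) (u' ^ s)) : Lifts c d L u u' := by
  classical
  obtain ⟨f, hf1, hf2⟩ := hlift
  have hex : ∀ q : G ⧸ zpowers (u ^ s), ∃ i : ℤ, ∀ a ∈ zpowers u, (a : G ⧸ zpowers (u ^ s)) = q →
      ∃ m : ℤ, a = u ^ i * (u ^ s) ^ m := by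
    intro q
    by_cases hq : ∃ i : ℤ, ((u ^ i : G) : G ⧸ zpowers (u ^ s)) = q
    · obtain ⟨i, hi⟩ := hq
      refine ⟨i, fun a _ haq => ?_⟩
      obtain ⟨m, hm⟩ := QuotientGroup.eq.mp (hi.trans haq.symm)
      exact ⟨m, by simp only at hm; rw [hm]; group⟩
    · refine ⟨0, fun a ha haq => ?_⟩
      obtain ⟨i, rfl⟩ := ha
      exact absurd ⟨i, haq⟩ hq
  choose i hi using hex
  let F : G → H := fun a => u' ^ i a * f (u ^ (-i a) * a)
  have hF : ∀ a ∈ zpowers u, ∃ N : ℤ, a = u ^ N ∧ (F a)⁻¹ * u' ^ N ∈ img c d L := by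
    intro a ha
    obtain ⟨m, hm⟩ := hi a a ha rfl
    refine ⟨i a + s * m, by rw [zpow_add, zpow_mul]; exact hm, ?_⟩
    have h1 : u ^ (-i a) * a = (u ^ s) ^ m := by
      rw [zpow_neg, inv_mul_eq_iff_eq_mul]
      exact hm
    have h2 : (F a)⁻¹ * u' ^ (i a + s * m) = (f ((u ^ s) ^ m))⁻¹ * (u' ^ s) ^ m := by
      simp only [F, h1, zpow_add, zpow_mul, mul_inv]
      rw [mul_mul_mul_comm, inv_mul_cancel, one_mul]
    rw [h2]
    exact hf2 m
  refine ⟨F, fun a ha b hb => ?_, fun n => ?_⟩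
  · by_cases hab : a * b⁻¹ ∈ zpowers (u ^ s)
    · have hq : (a : G ⧸ zpowers (u ^ s)) = b := by
        rw [eq_comm, QuotientGroup.eq, mul_comm]; exact hab
      have hmem : ∀ x ∈ zpowers u, u ^ (-i x) * x ∈ zpowers (u ^ s) := by
        intro x hx
        obtain ⟨m, hm⟩ := hi x x hx rfl
        refine ⟨m, ?_⟩
        have : (u ^ s) ^ m = u ^ (-i x) * (u ^ i x * (u ^ s) ^ m) := by group
        simp only
        rw [this, ← hm]
      have h1 := hf1 _ (hmem a ha) _ (hmem b hb)
      simp only [F]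
      rw [hq] at h1 ⊢
      have e1 : u ^ (-i b) * a * (u ^ (-i b) * b)⁻¹ = a * b⁻¹ := by
        rw [mul_inv, mul_mul_mul_comm, mul_inv_cancel, one_mul]
      rw [mul_inv, mul_mul_mul_comm, mul_inv_cancel, one_mul, ← h1, e1]
    · obtain ⟨N, hN, hN'⟩ := hF a ha
      obtain ⟨K, hK, hK'⟩ := hF b hb
      have hab' : a * b⁻¹ = u ^ (N - K) := by rw [zpow_sub, ← hN, ← hK]
      obtain ⟨k, hk, hk'⟩ := hg (N - K)
      have hl : k⁻¹ * (F a * (F b)⁻¹) ∈ img c d L := by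
        have h1 := mul_mem hk' (mul_mem (inv_mem hN') hK')
        convert h1 using 1
        rw [zpow_sub]
        simp only [mul_inv, inv_inv]
        have : k⁻¹ * (u' ^ N * (u' ^ K)⁻¹) * (F a * (u' ^ N)⁻¹ * ((F b)⁻¹ * u' ^ K)) =
          k⁻¹ * (F a * (F b)⁻¹) * (u' ^ N * (u' ^ N)⁻¹) * (u' ^ K * (u' ^ K)⁻¹) := by ac_rfl
        rw [this]; simp
      obtain ⟨g, hg'⟩ := h.ex_left (F a * (F b)⁻¹)
      obtain ⟨x, y, rfl, hx, hy⟩ := h.symm.transfer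
        (a := k) (b := k⁻¹ * (F a * (F b)⁻¹)) (k := g) (by rw [mul_inv_cancel_left, hg'])
      have hyL : y ∈ L := (h.mem_img_iff hL hy.symm).mp hl
      have hxc : c x = c (a * b⁻¹) := by rw [← hx, ← hk, hab']
      have hxu : x ∈ zpowers u := hu _ (mul_mem ha (inv_mem hb)) _ hxc
      have hxM : x ∉ zpowers (u ^ s) := fun hxM => hab (hM _ hxM _ hxc.symm)
      rw [← hg', hinv x hxu hxM y hyL, hxc]
  · obtain ⟨N, hN, hN'⟩ := hF (u ^ n) (zpow_mem_zpowers u n)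
    obtain ⟨k, hk, hk'⟩ := hg (n - N)
    rw [zpow_sub, ← hN, mul_inv_cancel, h.one] at hk
    have hk1 : k = 1 := h.right_one _ hk.symm
    rw [hk1, inv_one, one_mul, zpow_sub] at hk'
    have := mul_mem hN' hk'
    convert this using 1
    rw [mul_assoc, mul_comm (u' ^ n), mul_inv_cancel_left]

end Col
end SchurColor

/-! ### The lifting theorem -/

namespace SchurColor
open Subgroup
namespace Col
variable {p : ℕ} {G H C : Type*} [CommGroup G] [CommGroup H] {c : G → C} {d : H → C}

/-- If `⟨u⟩ \ R` is a single class, then a lift on `R` extends to `⟨u⟩`, whatever bijection of the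
cosets of `R` is taken. -/
lemma glue_wreath (h : Col c d) [Finite G] [Finite H] {u v : G} {u' : H} {R : Subgroup G}
    (hu : Closed c (zpowers u)) (hR : Closed c R) (hRv : R = zpowers v)
    (hone : ∀ g ∈ zpowers u, g ∉ R → c g = c u) (hlift : Lifts c d R v 1)
    (hu' : u' ∈ img c d (zpowers u)) (hRu : R ≤ zpowers u) : Lifts c d (zpowers u) u u' := by
  obtain ⟨f, hf1, hf2⟩ := hlift
  obtain ⟨e, he⟩ := (h.quot hR).bij 1 1 (h.quot hR).one
  have hout : ∀ q : G ⧸ R, ((q.out : G) : G ⧸ R) = q := fun q => QuotientGroup.out_eq' q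
  have hout' : ∀ q : H ⧸ img c d R, ((q.out : H) : H ⧸ img c d R) = q :=
    fun q => QuotientGroup.out_eq' q
  have hmem : ∀ a : G, (a : G ⧸ R).out⁻¹ * a ∈ R := fun a => QuotientGroup.eq.mp (hout a)
  have hfR : ∀ r ∈ R, f r ∈ img c d R := by
    intro r hr
    rw [hRv] at hr
    obtain ⟨n, rfl⟩ := hr
    have := hf2 n
    rw [one_zpow, mul_one, inv_mem_iff] at this
    exact this
  have hσ : ∀ a ∈ zpowers u, (e a).out ∈ img c d (zpowers u) := by
    intro a ha
    have h1 : c a ∈ qcol d (img c d R) (e a) := by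
      rw [← (he a).1]
      exact qcol_self _ a
    obtain ⟨k, hk, hk'⟩ := h1
    have h2 : k ∈ img c d (zpowers u) := (h.mem_img_iff hu hk'.symm).mpr ha
    have h3 : k⁻¹ * (e a).out ∈ img c d R := QuotientGroup.eq.mp (hk.trans (hout' _).symm)
    have h4 := mul_mem h2 (img_mono hRu h3)
    rwa [mul_inv_cancel_left] at h4
  let F : G → H := fun a => (e a).out * f ((a : G ⧸ R).out⁻¹ * a)
  have hFu : ∀ a ∈ zpowers u, F a ∈ img c d (zpowers u) := fun a ha =>
    mul_mem (hσ a ha) (img_mono hRu (hfR _ (hmem a)))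
  have hFe : ∀ a, (F a : H ⧸ img c d R) = e a := by
    intro a
    have : (F a : H ⧸ img c d R) = ((e a).out : H) := by
      rw [eq_comm, QuotientGroup.eq]
      simpa [F] using hfR _ (hmem a)
    rw [this, hout']
  refine ⟨F, fun a ha b hb => ?_, fun n => mul_mem (inv_mem (hFu _ (zpow_mem_zpowers u n)))
    (zpow_mem hu' n)⟩
  by_cases hab : a * b⁻¹ ∈ R
  · have hq : (a : G ⧸ R) = b := by
      rw [eq_comm, QuotientGroup.eq, mul_comm]; exact hab
    have h1 := hf1 _ (hRv.le (hmem a)) _ (hRv.le (hmem b))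
    simp only [F]
    rw [hq] at h1 ⊢
    have e1 : ((b : G ⧸ R).out⁻¹ * a) * ((b : G ⧸ R).out⁻¹ * b)⁻¹ = a * b⁻¹ := by
      rw [mul_inv, mul_mul_mul_comm, mul_inv_cancel, one_mul]
    rw [mul_inv, mul_mul_mul_comm, mul_inv_cancel, one_mul, ← h1, e1]
  · obtain ⟨g, hg⟩ := h.ex_left (F a * (F b)⁻¹)
    have h1 : g ∈ zpowers u :=
      (h.mem_img_iff hu hg).mp (mul_mem (hFu a ha) (inv_mem (hFu b hb)))
    have h2 : g ∉ R := by
      intro hgR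
      have h3 := (h.mem_img_iff hR hg).mpr hgR
      have h4 : (F a : H ⧸ img c d R) = F b := by
        rw [eq_comm, QuotientGroup.eq, mul_comm]; exact h3
      rw [hFe, hFe] at h4
      have h5 := e.injective h4
      rw [eq_comm, QuotientGroup.eq, mul_comm] at h5
      exact hab h5
    rw [← hg, hone g h1 h2, hone _ (mul_mem ha (inv_mem hb)) hab]

/-- If all members of the class of `u` generate `⟨u⟩`, then `⟨u ^ p⟩` is closed. -/
lemma closed_frattini (hP : PCyc p G) (h : Col c c) {u : G} (hu1 : u ≠ 1)
    (hu : Closed c (zpowers u)) (gen : ∀ z, c z = c u → u ∈ zpowers z) :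
    Closed c (zpowers (u ^ (p : ℤ))) := by
  have := hP.finite
  rintro _ ⟨j, rfl⟩ g hg
  simp only [← zpow_mul] at hg
  obtain ⟨m, rfl⟩ := hu _ (zpow_mem_zpowers u _) g hg
  by_cases hm : (p : ℤ) ∣ m
  · obtain ⟨t, rfl⟩ := hm
    exact ⟨t, by simp only [zpow_mul]⟩
  exfalso
  obtain ⟨m', hm', hmm⟩ := hP.exists_inv hm
  have h1 := h.multz hP hm' hg
  simp only [← zpow_mul] at h1
  rw [zpow_congr rfl hmm, zpow_one] at h1
  exact hP.not_mem_zpow hu1 (by rw [mul_assoc]; exact dvd_mul_right _ _) (gen _ h1.symm)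

lemma not_dvd_of_not_mem {u : G} {m : ℤ} (hm : u ^ m ∉ zpowers (u ^ (p : ℤ))) :
    ¬ (p : ℤ) ∣ m := by
  rintro ⟨t, rfl⟩
  exact hm ⟨t, by simp only [zpow_mul]⟩

/-- The main lifting theorem, by induction on the order of `u`. Either the class of `u` is the
complement in `⟨u⟩` of its radical, or it consists of generators of `⟨u⟩`; the induction hypothesis
is applied to the radical in the first case and to `⟨u ^ p⟩` in the second. -/
theorem lifts (hP : PCyc p G) (h : Col c d) [Finite H] : ∀ (N : ℕ) (u : G) (u' : H)
    (L : Subgroup G), orderOf u = N → Closed c (zpowers u) → Closed c L → L ≤ zpowers u →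
    Good c d L u u' → Lifts c d L u u' := by
  have := hP.finite
  intro N
  induction N using Nat.strong_induction_on with
  | _ N ih =>
  intro u u' L hN hu hL hLu hg
  subst hN
  by_cases hu1 : u = 1
  · subst hu1
    refine ⟨fun _ => 1, fun a ha b hb => ?_, fun n => ?_⟩
    · rw [zpowers_one_eq_bot, mem_bot] at ha hb
      subst ha hb
      simpa using h.one
    · obtain ⟨k, hk, hk'⟩ := hg n
      rw [one_zpow, h.one] at hk
      rw [h.right_one _ hk.symm] at hk'
      exact hk'
  have hmem : ∀ z, c z = c u → z ∈ zpowers u := hu u (mem_zpowers u)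
  have hRc := h.refl.rad_closed u
  have hRu : rad c u ≤ zpowers u := rad_le hmem
  have hunR : u ∉ rad c u := h.not_mem_rad hu1 rfl
  by_cases hcase : ∃ y, c y = c u ∧ u ∉ zpowers y
  · have hone := structure_thm hP h.refl u hmem hcase
    obtain ⟨v, hvR, hvmax⟩ := hP.exists_max (P := (· ∈ rad c u)) (one_mem _)
    have hRv : rad c u = zpowers v := le_antisymm hvmax (zpowers_le.mpr hvR)
    obtain ⟨s, hs⟩ := hRu hvR
    simp only at hs
    have hlt : orderOf v < orderOf u := hP.lt_order (hRu hvR) (hRv ▸ hunR)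
    by_cases hLR : L ≤ rad c u
    · have hM : rad c u = zpowers (u ^ s) := by rw [hs, hRv]
      refine h.glue (s := s) hu hL (hM ▸ hRc) ?_ hg (ih _ ?_ _ _ _ rfl (hM ▸ hRc) hL (hM ▸ hLR) ?_)
      · intro g hgu hgM l hl
        have hgc := hone g hgu (hM ▸ hgM)
        rw [mul_of_rad (hLR hl) hgc, hgc]
      · rw [hs]; exact hlt
      · intro n
        simpa only [← zpow_mul] using hg (s * n)
    · obtain ⟨l, hlL, hlR⟩ := SetLike.not_le_iff_exists.mp hLR
      have huL : u ∈ L := hL l hlL u (hone l (hLu hlL) hlR).symm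
      have hLe : L = zpowers u := le_antisymm hLu (zpowers_le.mpr huL)
      subst hLe
      refine h.glue_wreath hu hRc hRv hone (ih _ hlt _ _ _ rfl (hRv ▸ hRc) hRc hRv.le ?_) ?_ hRu
      · intro n
        obtain ⟨k, hk⟩ := h.ex_right (v ^ n)
        refine ⟨k, hk, ?_⟩
        rw [one_zpow, mul_one, inv_mem_iff]
        exact (h.mem_img_iff hRc hk).mpr (zpow_mem hvR n)
      · obtain ⟨k, hk, hk'⟩ := hg 1
        rw [zpow_one] at hk hk'
        have := mul_mem ((h.mem_img_iff hu hk).mpr (mem_zpowers u)) hk'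
        rwa [mul_inv_cancel_left] at this
  · push Not at hcase
    have hMc := closed_frattini hP h.refl hu1 hu hcase
    have hMu : zpowers (u ^ (p : ℤ)) ≤ zpowers u := zpowers_le.mpr (zpow_mem_zpowers u _)
    have hRM : rad c u ≤ zpowers (u ^ (p : ℤ)) := by
      intro r hr
      by_contra hrM
      obtain ⟨m, rfl⟩ := hRu hr
      exact hunR (zpowers_le.mpr hr (hP.mem_zpow (not_dvd_of_not_mem hrM) u))
    have hlt : orderOf (u ^ (p : ℤ)) < orderOf u :=
      hP.lt_order (zpow_mem_zpowers u _) (hP.not_mem_zpow hu1 dvd_rfl)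
    -- The class of a generator `u ^ m` is the image of the class of `u` under raising to the
    -- power `m`, which maps the radical `rad c u` onto itself.
    have hinv : ∀ g ∈ zpowers u, g ∉ zpowers (u ^ (p : ℤ)) → ∀ l ∈ rad c u, c (g * l) = c g := by
      rintro _ ⟨m, rfl⟩ hgM l hl
      have hm := not_dvd_of_not_mem hgM
      obtain ⟨m', -, hmm⟩ := hP.exists_inv hm
      have h1 := h.refl.multz hP hm (mul_of_rad (zpow_mem hl m') rfl)
      rwa [mul_zpow, ← zpow_mul l, mul_comm m', zpow_congr rfl hmm, zpow_one] at h1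
    have main : ∀ (L' : Subgroup G) (w : H), Closed c L' → L' ≤ rad c u → Good c d L' u w →
        Lifts c d L' u w := by
      intro L' w hL' hle hgw
      refine h.glue (s := p) hu hL' hMc (fun g h1 h2 l hl => hinv g h1 h2 l (hle hl)) hgw
        (ih _ hlt _ _ _ rfl hMc hL' (hle.trans hRM) fun n => ?_)
      simpa only [← zpow_mul] using hgw (p * n)
    rcases hP.le_total L (rad c u) with hLR | hRL
    · exact main L u' hL hLR hg
    obtain ⟨w, hw, hw'⟩ := hg 1
    rw [zpow_one] at hw hw'
    obtain ⟨f, hf1, hf2⟩ := main _ w hRc le_rfl (h.good_rad hP hu1 hcase hmem hw)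
    refine ⟨f, hf1, fun n => ?_⟩
    have := mul_mem (img_mono hRL (hf2 n)) (zpow_mem hw' n)
    convert this using 1
    rw [mul_zpow, inv_zpow, mul_assoc, mul_inv_cancel_left]

/-- A colour isomorphism from a cyclic `p`-group is realised by a bijection. -/
theorem exists_bijective (hP : PCyc p G) (h : Col c d) [Finite H] :
    ∃ f : G → H, Function.Bijective f ∧ ∀ a b, c (a * b⁻¹) = d (f a * (f b)⁻¹) := by
  have := hP.finite
  have := hP.cyclic
  obtain ⟨u, hu⟩ := IsCyclic.exists_generator (α := G)
  have htop : Closed c (zpowers u) := fun _ _ g _ => hu g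
  obtain ⟨f, hf, -⟩ := h.lifts hP _ u 1 (zpowers u) rfl htop htop le_rfl (by
    intro n
    obtain ⟨k, hk⟩ := h.ex_right (u ^ n)
    refine ⟨k, hk, ?_⟩
    rw [one_zpow, mul_one, inv_mem_iff]
    exact (h.mem_img_iff htop hk).mpr (hu _))
  have hf' : ∀ a b, c (a * b⁻¹) = d (f a * (f b)⁻¹) := fun a b => hf a (hu a) b (hu b)
  refine ⟨f, (Nat.bijective_iff_injective_and_card f).mpr ⟨fun a b hab => ?_, h.card_eq⟩, hf'⟩
  have h1 := hf' a b
  rw [hab, mul_inv_cancel, ← h.one] at h1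
  exact mul_inv_eq_one.mp (h.left_one _ h1)

end Col
end SchurColor

/-! ### S-rings as colourings -/

namespace SchurColor
open SRingPaper

variable {G H : Type*} [CommGroup G] [Finite G] [CommGroup H] [Finite H]

lemma structConst_eq_card {K : Type*} [Group K] (X Y : Set K) (z : K) :
    structConst X Y z = Nat.card {a : K // a ∈ X ∧ a⁻¹ * z ∈ Y} := by
  refine Nat.card_congr
    { toFun := fun q => ⟨q.1.1, q.2.1, ?_⟩
      invFun := fun a => ⟨(a.1, a.1⁻¹ * z), a.2.1, a.2.2, by simp⟩
      left_inv := ?_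
      right_inv := fun a => rfl }
  · obtain ⟨⟨x, y⟩, hx, hy, rfl⟩ := q
    simpa using hy
  · rintro ⟨⟨x, y⟩, hx, hy, rfl⟩
    simp

lemma structConst_pos {K : Type*} [Group K] [Finite K] {X Y : Set K} {z : K} :
    structConst X Y z ≠ 0 ↔ ∃ x ∈ X, ∃ y ∈ Y, x * y = z := by
  rw [structConst, Nat.card_ne_zero]
  constructor
  · rintro ⟨⟨⟨⟨x, y⟩, hx, hy, hz⟩⟩, -⟩
    exact ⟨x, hx, y, hy, hz⟩
  · rintro ⟨x, hx, y, hy, hz⟩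
    exact ⟨⟨⟨(x, y), hx, hy, hz⟩⟩, inferInstance⟩

/-- The basic set of an S-ring containing a given element. -/
noncomputable def part (A : SRing G) (g : G) : Set G := (A.exists_mem g).choose

lemma part_mem (A : SRing G) (g : G) : part A g ∈ A.parts := (A.exists_mem g).choose_spec.1

lemma mem_part (A : SRing G) (g : G) : g ∈ part A g := (A.exists_mem g).choose_spec.2

lemma part_eq_iff (A : SRing G) {g : G} {X : Set G} (hX : X ∈ A.parts) :
    part A g = X ↔ g ∈ X :=
  ⟨fun h => h ▸ mem_part A g, fun h => A.eq_of_mem _ (part_mem A g) _ hX g (mem_part A g) h⟩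

/-- An algebraic isomorphism of S-rings over abelian groups yields a colour isomorphism: colour
elements on both sides by the corresponding basic sets. -/
theorem col_of_algIso {A : SRing G} {B : SRing H} {φ : Set G → Set H} (hφ : IsAlgIso A B φ) :
    Col (fun g => φ (part A g)) (part B) := by
  have hmaps : ∀ g, φ (part A g) ∈ B.parts := fun g => hφ.bijOn.mapsTo (part_mem A g)
  have heq : ∀ {g k}, φ (part A g) = part B k ↔ k ∈ φ (part A g) := by
    intro g k
    rw [eq_comm, part_eq_iff B (hmaps g)]
  have hinj : ∀ {g X}, X ∈ A.parts → φ (part A g) = φ X → g ∈ X := by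
    intro g X hX h
    rw [← hφ.bijOn.injOn (part_mem A g) hX h]
    exact mem_part A g
  have hex : ∀ k, ∃ g, φ (part A g) = part B k := by
    intro k
    obtain ⟨X, hX, h⟩ := hφ.bijOn.surjOn (part_mem B k)
    obtain ⟨g, hg⟩ := A.nonempty_mem X hX
    exact ⟨g, by rw [(part_eq_iff A hX).mpr hg, h]⟩
  have hone : φ {1} = {1} := by
    obtain ⟨X, hX, hX1⟩ := hφ.bijOn.surjOn B.one_mem
    obtain ⟨k, hk⟩ := B.nonempty_mem _ (hφ.bijOn.mapsTo A.one_mem)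
    obtain ⟨g, hg⟩ := A.nonempty_mem X hX
    -- `{1} * X = X`, so `φ {1} * {1}` meets `{1}`
    have h1 := hφ.structConst_eq {1} A.one_mem X hX X hX g hg 1 (by rw [hX1]; rfl)
    have h2 : structConst {1} X g ≠ 0 := structConst_pos.mpr ⟨1, rfl, g, hg, one_mul g⟩
    rw [h1] at h2
    obtain ⟨x, hx, y, hy, hxy⟩ := structConst_pos.mp h2
    rw [hX1] at hy
    rw [Set.mem_singleton_iff.mp hy, mul_one] at hxy
    exact B.eq_of_mem _ (hφ.bijOn.mapsTo A.one_mem) _ B.one_mem 1 (hxy ▸ hx) rfl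
  have hpone : part A 1 = {1} := (part_eq_iff A A.one_mem).mpr rfl
  have hqone : part B 1 = {1} := (part_eq_iff B B.one_mem).mpr rfl
  have hinv : ∀ g k, φ (part A g) = part B k → φ (part A g⁻¹) = part B k⁻¹ := by
    intro g k e
    have h1 := hφ.structConst_eq _ (part_mem A g) _ (part_mem A g⁻¹) _ A.one_mem 1 rfl 1
      (by rw [hone]; rfl)
    have h2 : structConst (part A g) (part A g⁻¹) 1 ≠ 0 :=
      structConst_pos.mpr ⟨g, mem_part A g, g⁻¹, mem_part A g⁻¹, mul_inv_cancel g⟩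
    rw [h1] at h2
    obtain ⟨x, hx, y, hy, hxy⟩ := structConst_pos.mp h2
    have hy' : y⁻¹ ∈ part B k := by
      rw [← e, ← eq_inv_of_mul_eq_one_left hxy]; exact hx
    have h3 := B.inv_mem _ (part_mem B k)
    have h4 : φ (part A g⁻¹) = (part B k)⁻¹ :=
      B.eq_of_mem _ (hmaps _) _ h3 y hy (Set.mem_inv.mpr hy')
    rw [h4, eq_comm, part_eq_iff B h3, Set.mem_inv, inv_inv]
    exact mem_part B k
  refine ⟨?_, ?_, ?_, hinv, ?_, hex, ?_⟩
  · simp only [hpone, hqone, hone]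
  · intro g hg
    simp only [hpone] at hg
    exact Set.mem_singleton_iff.mp (hinj A.one_mem hg)
  · intro k hk
    rw [hqone] at hk
    exact (part_eq_iff B B.one_mem).mp hk
  · intro g
    obtain ⟨k, hk⟩ := B.nonempty_mem _ (hmaps g)
    exact ⟨k, heq.mpr hk⟩
  · intro g k e
    let F : G → Set H × Set H := fun a => (φ (part A a), φ (part A (a⁻¹ * g)))
    let F' : H → Set H × Set H := fun b => (part B b, part B (b⁻¹ * k))
    have hcard : ∀ s, Nat.card {a // F a = s} = Nat.card {b // F' b = s} := by
      rintro ⟨S, T⟩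
      by_cases hST : S ∈ B.parts ∧ T ∈ B.parts
      · obtain ⟨X, hX, rfl⟩ := hφ.bijOn.surjOn hST.1
        obtain ⟨Y, hY, rfl⟩ := hφ.bijOn.surjOn hST.2
        have h1 := hφ.structConst_eq X hX Y hY _ (part_mem A g) g (mem_part A g) k (heq.mp e)
        rw [structConst_eq_card, structConst_eq_card] at h1
        have hiff : ∀ {a Z}, Z ∈ A.parts → (φ (part A a) = φ Z ↔ a ∈ Z) := fun hZ =>
          ⟨hinj hZ, fun ha => by rw [(part_eq_iff A hZ).mpr ha]⟩
        refine Eq.trans (Nat.card_congr (Equiv.subtypeEquivRight fun a => ?_))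
          (h1.trans (Nat.card_congr (Equiv.subtypeEquivRight fun b => ?_)))
        · simp only [F, Prod.mk.injEq, hiff hX, hiff hY]
        · simp only [F', Prod.mk.injEq, part_eq_iff B hST.1, part_eq_iff B hST.2]
      · have e1 : IsEmpty {a // F a = (S, T)} := ⟨fun a => hST (by
          have := Prod.mk.injEq .. ▸ a.2
          exact ⟨this.1 ▸ hmaps _, this.2 ▸ hmaps _⟩)⟩
        have e2 : IsEmpty {b // F' b = (S, T)} := ⟨fun b => hST (by
          have := Prod.mk.injEq .. ▸ b.2
          exact ⟨this.1 ▸ part_mem B _, this.2 ▸ part_mem B _⟩)⟩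
        rw [Nat.card_of_isEmpty, Nat.card_of_isEmpty]
    have eqv : ∀ s, Nonempty ({a // F a = s} ≃ {b // F' b = s}) := fun s =>
      Finite.card_eq.mp (hcard s)
    refine ⟨Equiv.ofFiberEquiv (f := F) (g := F') fun s => (eqv s).some, fun a => ?_⟩
    have := Equiv.ofFiberEquiv_map (f := F) (g := F') (fun s => (eqv s).some) a
    exact ⟨(congrArg Prod.fst this).symm, (congrArg Prod.snd this).symm⟩

/-- A bijection preserving the colours of quotients induces the given algebraic isomorphism. -/
theorem inducedBy_of_col {A : SRing G} {B : SRing H} {φ : Set G → Set H} (hφ : IsAlgIso A B φ)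
    {f : G → H} (hf : Function.Bijective f)
    (hc : ∀ a b, φ (part A (a * b⁻¹)) = part B (f a * (f b)⁻¹)) : InducedBy A φ f := by
  have key : ∀ X ∈ A.parts, ∀ a b, a * b⁻¹ ∈ X ↔ f a * (f b)⁻¹ ∈ φ X := by
    intro X hX a b
    rw [← part_eq_iff A hX, ← part_eq_iff B (hφ.bijOn.mapsTo hX), ← hc]
    exact ⟨fun h => by rw [h], fun h => hφ.bijOn.injOn (part_mem A _) hX h⟩
  refine ⟨hf, fun X hX => ?_⟩
  ext ⟨s, t⟩
  constructor
  · rintro ⟨⟨b, a⟩, ⟨x, hx, hax⟩, hst⟩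
    obtain ⟨rfl, rfl⟩ := Prod.mk.inj hst
    refine ⟨f a * (f b)⁻¹, (key X hX a b).mp ?_, by simp⟩
    simp only at hax
    rw [hax, mul_inv_cancel_right]
    exact hx
  · rintro ⟨y, hy, hty⟩
    obtain ⟨b, rfl⟩ := hf.2 s
    obtain ⟨a, rfl⟩ := hf.2 t
    refine ⟨(b, a), ⟨a * b⁻¹, (key X hX a b).mpr ?_, by simp⟩, rfl⟩
    simp only at hty
    rw [hty, mul_inv_cancel_right]
    exact hy

theorem sepAbelian_of_pcyc {p : ℕ} (hP : PCyc p G) (A : SRing G) : SepAbelian A := by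
  intro H _ _ B φ hφ
  obtain ⟨f, hf, hc⟩ := (col_of_algIso hφ).exists_bijective hP
  exact ⟨f, inducedBy_of_col hφ hf hc⟩

end SchurColor

open SRingPaper in
/-- every S-ring over a finite cyclic group of prime-power order
is separable with respect to the class of finite abelian groups. -/
theorem cyclic_p_group_is_separable_wrt_abelian
    (p : ℕ) (hp : p.Prime) (G : Type*) [Group G] [Finite G]
    (hcyc : IsCyclic G) (hcard : ∃ k : ℕ, Nat.card G = p ^ k)
    (A : SRing G) : SepAbelian A := by
  let _ : CommGroup G := IsCyclic.commGroup
  exact SchurColor.sepAbelian_of_pcyc ⟨hp, inferInstance, hcyc, hcard⟩ A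
end

section
/- Let 𝒜 be a schurian S-ring over a finite group G and let K be a subgroup of Iso(𝒜). Put Φ = {φ_f : f ∈ K}, a subgroup of Aut_alg(𝒜). Then the algebraic fusion 𝒜^Φ is schurian. -/
/-!
Let `A = V(H, G)` with `G_right ≤ H`. The fusion `A^Φ` equals `V(L, G)`, where `L` is the group of
all permutations of `G` acting on the relations `R(X)`, `X` a basic set of `A`, in the same way as
some `f ∈ K` (that is, `L = K · Aut(A)`); it contains `H`, and hence `G_right`
(`mapRel_RSet_of_mem`).

If `g` lies in the basic set `X`, then an element of `L` that fixes `1` and acts like `f` maps the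
pair `(1, g) ∈ R(X)` into `R(φ_f X)`, so the orbit of `g` under `L_1` is contained in the union of
the sets `φ_f X`. Conversely, for `h ∈ φ_f X` the permutation `f` followed by the right translation
by `f(1)⁻¹` fixes `1` and maps `g` into `φ_f X`, which is an orbit of `H_1`; an element of `H_1`
then moves the image of `g` to `h`.
-/

open scoped Pointwise

namespace SRingPaper

variable {G : Type*} [Group G]

lemma one_mem_RSet_iff {X : Set G} {g : G} : ((1 : G), g) ∈ RSet X ↔ g ∈ X := by
  simp [RSet]

lemma mapRel_one (R : Set (G × G)) : mapRel (⇑(1 : Equiv.Perm G)) R = R := mapRel_id R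

lemma mapRel_mul (p q : Equiv.Perm G) (R : Set (G × G)) :
    mapRel (⇑(p * q)) R = mapRel p (mapRel q R) := mapRel_comp p q R

lemma mapRel_inv_mapRel (p : Equiv.Perm G) (R : Set (G × G)) :
    mapRel (⇑p⁻¹) (mapRel p R) = R := by
  rw [← mapRel_mul, inv_mul_cancel, mapRel_one]

lemma mapRel_RSet_subset {H : Subgroup (Equiv.Perm G)} (hH : ∀ g : G, Equiv.mulRight g ∈ H)
    {X : Set G} (hX : ∀ q ∈ H, q 1 = 1 → ∀ x ∈ X, q x ∈ X) {a : Equiv.Perm G} (ha : a ∈ H) :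
    mapRel a (RSet X) ⊆ RSet X := by
  rintro _ ⟨⟨u, v⟩, ⟨x, hx, hv⟩, rfl⟩
  dsimp only at hv
  subst hv
  -- Conjugating by right translations moves the base point `u` to `1`.
  have hq := hX (Equiv.mulRight (a u)⁻¹ * a * Equiv.mulRight u)
    (H.mul_mem (H.mul_mem (hH _) ha) (hH u)) (by simp) x hx
  exact ⟨_, hq, by simp⟩

/-- A permutation group containing the right translations preserves `R(X)` for every set `X`
invariant under its stabilizer of `1`. -/
lemma mapRel_RSet_of_mem {H : Subgroup (Equiv.Perm G)} (hH : ∀ g : G, Equiv.mulRight g ∈ H)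
    {X : Set G} (hX : ∀ q ∈ H, q 1 = 1 → ∀ x ∈ X, q x ∈ X) {a : Equiv.Perm G} (ha : a ∈ H) :
    mapRel a (RSet X) = RSet X := by
  refine (mapRel_RSet_subset hH hX ha).antisymm ?_
  have h := Set.image_mono (f := fun p : G × G => (a p.1, a p.2))
    (mapRel_RSet_subset hH hX (H.inv_mem ha))
  have h' := mapRel_inv_mapRel a⁻¹ (RSet X)
  rw [inv_inv] at h'
  exact h'.symm.subset.trans h

/-- The permutations of `G` that act on the relations `R(X)`, `X` a basic set of `A`, in the same
way as some element of `K`. The hypothesis says that `K` permutes these relations. -/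
def fusionGroup [Finite G] (A : SRing G) (K : Subgroup (Equiv.Perm G))
    (hK : ∀ f ∈ K, ∀ X ∈ A.parts, ∃ Y ∈ A.parts, mapRel f (RSet X) = RSet Y) :
    Subgroup (Equiv.Perm G) where
  carrier := {p | ∃ f ∈ K, ∀ X ∈ A.parts, mapRel p (RSet X) = mapRel f (RSet X)}
  one_mem' := ⟨1, K.one_mem, fun _ _ => rfl⟩
  mul_mem' := by
    rintro p q ⟨f, hf, hp⟩ ⟨g, hg, hq⟩
    refine ⟨f * g, K.mul_mem hf hg, fun X hX => ?_⟩
    obtain ⟨Y, hY, hgX⟩ := hK g hg X hX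
    rw [mapRel_mul, mapRel_mul, hq X hX, hgX, hp Y hY]
  inv_mem' := by
    rintro p ⟨f, hf, hp⟩
    refine ⟨f⁻¹, K.inv_mem hf, fun X hX => ?_⟩
    obtain ⟨Y, hY, hfX⟩ := hK f⁻¹ (K.inv_mem hf) X hX
    have h : mapRel p (RSet Y) = RSet X := by
      rw [hp Y hY, ← hfX, ← mapRel_mul, mul_inv_cancel, mapRel_one]
    rw [hfX, ← h, mapRel_inv_mapRel]

end SRingPaper

open SRingPaper in
/-- the algebraic fusion of a schurian S-ring `A` with respect to
`Φ = {φ_f : f ∈ K}`, for a subgroup `K ≤ Iso(A)`, is schurian.  Here `phi f`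
denotes the algebraic automorphism `φ_f` induced by `f ∈ K`, and `B` is the
fusion S-ring whose basic sets are the sets `X^Φ = ⋃_{f ∈ K} X^{φ_f}`. -/
theorem algebraic_fusion_schurian
    (G : Type*) [Group G] [Finite G] (A : SRing G)
    (hA : IsSchurian A)
    (K : Subgroup (Equiv.Perm G))
    (hK : ∀ f ∈ K, IsIso A A ⇑f)
    (phi : Equiv.Perm G → Set G → Set G)
    (hphi : ∀ f ∈ K, ∀ X ∈ A.parts,
      phi f X ∈ A.parts ∧ mapRel (⇑f) (RSet X) = RSet (phi f X))
    (B : SRing G)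
    (hB : B.parts = {Y : Set G | ∃ X ∈ A.parts, Y = ⋃ f ∈ (K : Set (Equiv.Perm G)), phi f X}) :
    IsSchurian B := by
  obtain ⟨H, hH, hparts⟩ := hA
  have hKA : ∀ f ∈ K, ∀ X ∈ A.parts, ∃ Y ∈ A.parts, mapRel f (RSet X) = RSet Y :=
    fun f hf X hX => ⟨phi f X, hphi f hf X hX⟩
  have hinv : ∀ X ∈ A.parts, ∀ q ∈ H, q 1 = 1 → ∀ x ∈ X, q x ∈ X := by
    intro X hX q hq hq1 x hx
    rw [hparts] at hX
    obtain ⟨g, rfl⟩ := hX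
    obtain ⟨p, hp, hp1, rfl⟩ := hx
    exact ⟨q * p, H.mul_mem hq hp, by simp [hp1, hq1], rfl⟩
  have htrans : ∀ X ∈ A.parts, ∀ x ∈ X, ∀ y ∈ X, ∃ q ∈ H, q 1 = 1 ∧ q x = y := by
    intro X hX x hx y hy
    rw [hparts] at hX
    obtain ⟨g, rfl⟩ := hX
    obtain ⟨p, hp, hp1, rfl⟩ := hx
    obtain ⟨q, hq, hq1, rfl⟩ := hy
    refine ⟨q * p⁻¹, H.mul_mem hq (H.inv_mem hp), ?_, by simp⟩
    rw [Equiv.Perm.mul_apply, Equiv.Perm.inv_eq_iff_eq.mpr hp1.symm, hq1]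
  have hHL : H ≤ fusionGroup A K hKA := fun a ha =>
    ⟨1, K.one_mem, fun X hX => by rw [mapRel_RSet_of_mem hH (hinv X hX) ha, mapRel_one]⟩
  have hKL : K ≤ fusionGroup A K hKA := fun f hf => ⟨f, hf, fun _ _ => rfl⟩
  have horb : ∀ X ∈ A.parts, ∀ g ∈ X, (⋃ f ∈ (K : Set (Equiv.Perm G)), phi f X) =
      {h : G | ∃ p ∈ fusionGroup A K hKA, p 1 = 1 ∧ p g = h} := by
    intro X hX g hg
    ext h
    simp only [Set.mem_iUnion, Set.mem_setOf_eq, SetLike.mem_coe, exists_prop]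
    constructor
    · rintro ⟨f, hf, hh⟩
      obtain ⟨hfX, hfR⟩ := hphi f hf X hX
      have hg' : Equiv.mulRight (f 1)⁻¹ (f g) ∈ phi f X := by
        have : (f 1, f g) ∈ RSet (phi f X) := by
          rw [← hfR]
          exact ⟨(1, g), one_mem_RSet_iff.mpr hg, rfl⟩
        obtain ⟨x, hx, hxe⟩ := this
        dsimp only at hxe
        simpa [hxe] using hx
      obtain ⟨q, hq, hq1, hqh⟩ := htrans _ hfX _ hg' _ hh
      exact ⟨q * (Equiv.mulRight (f 1)⁻¹ * f),
        mul_mem (hHL hq) (mul_mem (hHL (hH _)) (hKL hf)), by simp [hq1], hqh⟩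
    · rintro ⟨p, ⟨f, hf, hp⟩, hp1, rfl⟩
      refine ⟨f, hf, ?_⟩
      rw [← one_mem_RSet_iff, ← (hphi f hf X hX).2, ← hp X hX]
      exact ⟨(1, g), one_mem_RSet_iff.mpr hg, by simp [hp1]⟩
  refine ⟨fusionGroup A K hKA, fun g => hHL (hH g), ?_⟩
  rw [hB]
  ext Y
  constructor
  · rintro ⟨X, hX, rfl⟩
    obtain ⟨g, hg⟩ := A.nonempty_mem X hX
    exact ⟨g, horb X hX g hg⟩
  · rintro ⟨g, rfl⟩
    obtain ⟨X, hX, hg⟩ := A.exists_mem g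
    exact ⟨X, hX, (horb X hX g hg).symm⟩
end

section
/- The tensor product of two S-rings, each separable with respect to the class 𝒦_A of finite abelian groups, is separable with respect to 𝒦_A. -/
/-!
Let `φ` be an algebraic isomorphism from `A₁ ⊗ A₂` to an S-ring over a finite abelian group `H`.
Since `φ` preserves which products of basic sets contain which basic sets, the sets
`H₁ = ⋃ φ(X × {1})` and `H₂ = ⋃ φ({1} × Y)` are subgroups of `H` (`imageSubgroup`), and `φ`
restricts to algebraic isomorphisms from `A₁` and `A₂` to the induced S-rings on `H₁` and `H₂`
(`isAlgIso_imageSRing`). By separability these are induced by bijections `f₁ : G₁ → H₁` and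
`f₂ : G₂ → H₂` (`exists_map_of_sep`).

Put `f (g₁, g₂) = f₁ g₁ * f₂ g₂`. Since `X × Y = (X × {1}) ({1} × Y)`, also
`φ(X × Y) = φ(X × {1}) φ({1} × Y)`, and commutativity of `H` shows that `f` maps `R(X × Y)` into
`R(φ(X × Y))`. Distinct basic sets have disjoint images under `φ`, so `f` is injective and the
inclusion is an equality as soon as `f` is surjective; the latter holds because `H = H₁ H₂`.

Both factors are treated at once, as S-rings embedded in `A₁ ⊗ A₂` by an injective homomorphism
`ι`. As the three separability statements may refer to groups in different universes, the
subgroups `H₁` and `H₂` are replaced by copies `K` with an embedding `j : K → H`.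
-/


open scoped Pointwise

namespace SRingPaper

/-! ### Structure constants and injective homomorphisms -/

lemma structConst_pos_iff {G : Type*} [Group G] [Finite G] (X Y : Set G) (z : G) :
    0 < structConst X Y z ↔ z ∈ X * Y := by
  unfold structConst
  rw [Nat.card_pos_iff, Set.mem_mul]
  constructor
  · rintro ⟨⟨⟨p, h1, h2, h3⟩⟩, -⟩
    exact ⟨p.1, h1, p.2, h2, h3⟩
  · rintro ⟨x, hx, y, hy, h⟩
    exact ⟨⟨⟨(x, y), hx, hy, h⟩⟩, inferInstance⟩

lemma structConst_preimage {K H : Type*} [Group K] [Group H] (j : K →* H)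
    (hj : Function.Injective j) {X Y : Set H} (hX : X ⊆ Set.range j) (hY : Y ⊆ Set.range j)
    (k : K) : structConst (j ⁻¹' X) (j ⁻¹' Y) k = structConst X Y (j k) := by
  refine Nat.card_congr (Equiv.ofBijective
    (fun p => ⟨(j p.1.1, j p.1.2), p.2.1, p.2.2.1, by rw [← map_mul, p.2.2.2]⟩) ⟨?_, ?_⟩)
  · rintro ⟨⟨a, b⟩, hp⟩ ⟨⟨c, d⟩, hq⟩ h
    simp only [Subtype.mk.injEq, Prod.mk.injEq] at h ⊢
    exact ⟨hj h.1, hj h.2⟩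
  · rintro ⟨⟨a, b⟩, ha, hb, hab⟩
    obtain ⟨a, rfl⟩ := hX ha
    obtain ⟨b, rfl⟩ := hY hb
    exact ⟨⟨(a, b), ha, hb, hj (by simpa using hab)⟩, rfl⟩

lemma structConst_image {K H : Type*} [Group K] [Group H] (j : K →* H)
    (hj : Function.Injective j) (X Y : Set K) (k : K) :
    structConst (j '' X) (j '' Y) (j k) = structConst X Y k := by
  rw [← structConst_preimage j hj (Set.image_subset_range _ _) (Set.image_subset_range _ _),
    Set.preimage_image_eq _ hj, Set.preimage_image_eq _ hj]

/-! ### Elementary properties of algebraic isomorphisms -/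

section AlgIso

variable {G H : Type*} [Group G] [Finite G] [Group H] [Finite H]
  {B : SRing G} {B' : SRing H} {φ : Set G → Set H}

/-- Algebraic isomorphisms preserve whether a basic set `Z` occurs in a product `X * Y`. -/
lemma IsAlgIso.mem_mul_iff (hφ : IsAlgIso B B' φ) {X Y Z : Set G} (hX : X ∈ B.parts)
    (hY : Y ∈ B.parts) (hZ : Z ∈ B.parts) {z : G} (hz : z ∈ Z) {z' : H} (hz' : z' ∈ φ Z) :
    z ∈ X * Y ↔ z' ∈ φ X * φ Y := by
  rw [← structConst_pos_iff, ← structConst_pos_iff,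
    hφ.structConst_eq X hX Y hY Z hZ z hz z' hz']

/-- The images of the basic sets cover the target group. -/
lemma IsAlgIso.exists_mem (hφ : IsAlgIso B B' φ) (h : H) : ∃ Z ∈ B.parts, h ∈ φ Z := by
  obtain ⟨Z', hZ', hh⟩ := B'.exists_mem h
  obtain ⟨Z, hZ, rfl⟩ := hφ.bijOn.surjOn hZ'
  exact ⟨Z, hZ, hh⟩

lemma IsAlgIso.eq_of_mem (hφ : IsAlgIso B B' φ) {X Y : Set G} (hX : X ∈ B.parts)
    (hY : Y ∈ B.parts) {h : H} (h1 : h ∈ φ X) (h2 : h ∈ φ Y) : X = Y :=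
  hφ.bijOn.injOn hX hY
    (B'.eq_of_mem _ (hφ.bijOn.mapsTo hX) _ (hφ.bijOn.mapsTo hY) h h1 h2)

/-- The preimage `E` of `{1}` satisfies `E ⊆ E * {1}`, hence `1 ∈ {1} * φ {1}`. -/
lemma IsAlgIso.map_one (hφ : IsAlgIso B B' φ) : φ {1} = {1} := by
  obtain ⟨E, hE, hE'⟩ := hφ.bijOn.surjOn B'.one_mem
  obtain ⟨e, he⟩ := B.nonempty_mem E hE
  have h := (hφ.mem_mul_iff hE B.one_mem hE he (z' := 1) (by simp [hE'])).1 (by simpa using he)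
  rw [hE'] at h
  exact B'.eq_of_mem _ (hφ.bijOn.mapsTo B.one_mem) _ B'.one_mem 1 (by simpa using h) (by simp)

end AlgIso

/-! ### Restriction of an algebraic isomorphism to an embedded S-ring -/

section Factor

universe w

variable {G₁ G H : Type*} [Group G₁] [Finite G₁] [Group G] [Finite G] [CommGroup H] [Finite H]
  {A : SRing G₁} {B : SRing G} {B' : SRing H} {φ : Set G → Set H} {ι : G₁ →* G}

/-- The subgroup `⋃ φ(ι(X))` of `H`, over the basic sets `X` of `A`, corresponding under the
algebraic isomorphism `φ` to the `B`-subgroup `ι(G₁)` of `G`. -/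
def imageSubgroup (ι : G₁ →* G) (hι : ∀ X ∈ A.parts, ι '' X ∈ B.parts)
    (hφ : IsAlgIso B B' φ) : Subgroup H :=
  let M : Submonoid H :=
    { carrier := {h : H | ∃ X ∈ A.parts, h ∈ φ (ι '' X)}
      mul_mem' := by
        rintro u v ⟨X, hX, hu⟩ ⟨Y, hY, hv⟩
        obtain ⟨Z, hZ, hZ'⟩ := hφ.exists_mem (u * v)
        obtain ⟨z, hz⟩ := B.nonempty_mem Z hZ
        obtain ⟨-, ⟨x, hx, rfl⟩, -, ⟨y, hy, rfl⟩, rfl⟩ :=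
          (hφ.mem_mul_iff (hι X hX) (hι Y hY) hZ hz hZ').2 (Set.mul_mem_mul hu hv)
        obtain ⟨W, hW, hxy⟩ := A.exists_mem (x * y)
        refine ⟨W, hW, ?_⟩
        rwa [B.eq_of_mem _ (hι W hW) _ hZ (ι (x * y)) ⟨_, hxy, rfl⟩ (by simpa using hz)]
      one_mem' := ⟨{1}, A.one_mem, by simp [hφ.map_one]⟩ }
  { M with
    inv_mem' := by
      intro x (hx : x ∈ M)
      -- in a finite group the inverse of `x` is a nonnegative power of `x`
      have h : x ^ (Nat.card H - 1) = x⁻¹ := by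
        rw [eq_inv_iff_mul_eq_one, ← pow_succ, Nat.sub_add_cancel Nat.card_pos, pow_card_eq_one']
      exact h ▸ pow_mem hx (Nat.card H - 1) }

/-- The S-ring induced by `B'` on the subgroup `⋃ φ(ι(X))`, seen through an embedding `j` of
some group `K` onto that subgroup. -/
def imageSRing {K : Type*} [CommGroup K] [Finite K] (j : K →* H)
    (hj : Function.Injective j)
    (hι : ∀ X ∈ A.parts, ι '' X ∈ B.parts) (hφ : IsAlgIso B B' φ)
    (hr : j.range = imageSubgroup ι hι hφ) : SRing K :=
  have hmem : ∀ h : H, h ∈ Set.range j ↔ ∃ X ∈ A.parts, h ∈ φ (ι '' X) := fun h => by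
    rw [← MonoidHom.coe_range, hr]; rfl
  have hsub : ∀ X ∈ A.parts, φ (ι '' X) ⊆ Set.range j := fun X hX h hh =>
    (hmem h).2 ⟨X, hX, hh⟩
  { parts := (fun X => j ⁻¹' φ (ι '' X)) '' A.parts
    nonempty_mem := by
      rintro - ⟨X, hX, rfl⟩
      obtain ⟨h, hh⟩ := B'.nonempty_mem _ (hφ.bijOn.mapsTo (hι X hX))
      obtain ⟨k, rfl⟩ := hsub X hX hh
      exact ⟨k, hh⟩
    exists_mem := by
      intro k
      obtain ⟨X, hX, hk⟩ := (hmem (j k)).1 ⟨k, rfl⟩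
      exact ⟨_, ⟨X, hX, rfl⟩, hk⟩
    eq_of_mem := by
      rintro - ⟨X, hX, rfl⟩ - ⟨Y, hY, rfl⟩ g hg hg'
      simp only [hφ.eq_of_mem (hι X hX) (hι Y hY) hg hg']
    one_mem := by
      refine ⟨{1}, A.one_mem, ?_⟩
      ext k
      simp [hφ.map_one, map_eq_one_iff j hj]
    inv_mem := by
      rintro - ⟨X, hX, rfl⟩
      have hX' := hφ.bijOn.mapsTo (hι X hX)
      obtain ⟨h, hh⟩ := B'.nonempty_mem _ hX'
      obtain ⟨k, rfl⟩ := hsub X hX hh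
      obtain ⟨Y, hY, hk⟩ := (hmem (j k⁻¹)).1 ⟨_, rfl⟩
      refine ⟨Y, hY, ?_⟩
      simp only
      rw [B'.eq_of_mem _ (hφ.bijOn.mapsTo (hι Y hY)) _ (B'.inv_mem _ hX') (j k⁻¹) hk
        (by simpa using hh)]
      ext; simp
    structConst_const := by
      rintro - ⟨X, hX, rfl⟩ - ⟨Y, hY, rfl⟩ - ⟨Z, hZ, rfl⟩ z hz z' hz'
      rw [structConst_preimage j hj (hsub X hX) (hsub Y hY),
        structConst_preimage j hj (hsub X hX) (hsub Y hY)]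
      exact B'.structConst_const _ (hφ.bijOn.mapsTo (hι X hX)) _ (hφ.bijOn.mapsTo (hι Y hY)) _
        (hφ.bijOn.mapsTo (hι Z hZ)) _ hz _ hz' }

lemma isAlgIso_imageSRing {K : Type*} [CommGroup K] [Finite K] (hιinj : Function.Injective ι)
    (j : K →* H) (hj : Function.Injective j)
    (hι : ∀ X ∈ A.parts, ι '' X ∈ B.parts) (hφ : IsAlgIso B B' φ)
    (hr : j.range = imageSubgroup ι hι hφ) :
    IsAlgIso A (imageSRing j hj hι hφ hr) (fun X => j ⁻¹' φ (ι '' X)) := by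
  have hsub : ∀ X ∈ A.parts, φ (ι '' X) ⊆ Set.range j := fun X hX h hh => by
    rw [← MonoidHom.coe_range, hr]; exact ⟨X, hX, hh⟩
  refine ⟨⟨fun X hX => ⟨X, hX, rfl⟩, fun X hX Y hY h => ?_, fun _ h => h⟩, ?_⟩
  · obtain ⟨k, hk⟩ := B'.nonempty_mem _ (hφ.bijOn.mapsTo (hι X hX))
    obtain ⟨k, rfl⟩ := hsub X hX hk
    have hk' : k ∈ j ⁻¹' φ (ι '' Y) := by
      rw [← show j ⁻¹' φ (ι '' X) = j ⁻¹' φ (ι '' Y) from h]; exact hk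
    exact hιinj.image_injective (hφ.eq_of_mem (hι X hX) (hι Y hY) hk hk')
  · intro X hX Y hY Z hZ z hz z' hz'
    rw [structConst_preimage j hj (hsub X hX) (hsub Y hY), ← structConst_image ι hιinj]
    exact hφ.structConst_eq _ (hι X hX) _ (hι Y hY) _ (hι Z hZ) _ ⟨z, hz, rfl⟩ _ hz'

/-- If `ι` embeds a separable S-ring `A` in `B`, then the restriction to `A` of an algebraic
isomorphism `φ` from `B` is induced by a map `f` from `G₁` onto the subgroup `⋃ φ(ι(X))` of `H`.
The second clause records surjectivity in the form used later: the range of `f` is stable under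
multiplication by each `φ(ι(X))`.
Separability is tested on a copy of that subgroup in the universe required by `SepAbelian`. -/
lemma exists_map_of_sep (hA : SepAbelian.{_, w} A) (hιinj : Function.Injective ι)
    (hι : ∀ X ∈ A.parts, ι '' X ∈ B.parts) (hφ : IsAlgIso B B' φ) :
    ∃ f : G₁ → H,
      (∀ X ∈ A.parts, ∀ g g', g' * g⁻¹ ∈ X → f g' * (f g)⁻¹ ∈ φ (ι '' X)) ∧
      (∀ X ∈ A.parts, ∀ u ∈ φ (ι '' X), ∀ g, ∃ g', f g' = u * f g) := by
  let S := imageSubgroup ι hι hφ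
  let e : Shrink.{w} S ≃* S := Shrink.mulEquiv
  let j : Shrink.{w} S →* H := S.subtype.comp e.toMonoidHom
  have hj : Function.Injective j := S.subtype_injective.comp e.injective
  have hr : j.range = S := by
    ext h
    constructor
    · rintro ⟨k, rfl⟩
      exact (e k).2
    · intro hh
      exact ⟨e.symm ⟨h, hh⟩, by simp [j]⟩
  have : Finite (Shrink.{w} S) := Finite.of_equiv S e.symm.toEquiv
  obtain ⟨f, -, hf⟩ := hA (Shrink.{w} S) (imageSRing j hj hι hφ hr) _
    (isAlgIso_imageSRing hιinj j hj hι hφ hr)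
  refine ⟨fun g => j (f g), fun X hX g g' hg => ?_, fun X hX u hu g => ?_⟩
  · have : (f g, f g') ∈ mapRel f (RSet X) := ⟨(g, g'), ⟨_, hg, by simp⟩, rfl⟩
    rw [hf X hX] at this
    obtain ⟨x, hx, h⟩ := this
    have h : f g' = x * f g := h
    simpa [h] using hx
  · have : u ∈ j.range := by rw [hr]; exact ⟨X, hX, hu⟩
    obtain ⟨k, rfl⟩ := this
    have : (f g, k * f g) ∈ RSet (j ⁻¹' φ (ι '' X)) := ⟨k, hu, rfl⟩
    rw [← hf X hX] at this
    obtain ⟨⟨a, b⟩, -, hp⟩ := this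
    simp only [Prod.mk.injEq] at hp
    exact ⟨b, by simp [hp.2]⟩

end Factor

end SRingPaper

/-! ### The tensor product -/

open SRingPaper in
/-- the tensor product of two S-rings, each separable with respect to
the class of finite abelian groups, is separable with respect to that class.
`B` is the tensor product `A₁ ⊗ A₂`: its basic sets are the products `X ×ˢ Y`
of basic sets of `A₁` and `A₂`. -/
theorem tensor_product_separable
    (G₁ G₂ : Type*) [Group G₁] [Finite G₁] [Group G₂] [Finite G₂]
    (A₁ : SRing G₁) (A₂ : SRing G₂)
    (h₁ : SepAbelian A₁) (h₂ : SepAbelian A₂)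
    (B : SRing (G₁ × G₂))
    (hB : B.parts = {Z : Set (G₁ × G₂) | ∃ X ∈ A₁.parts, ∃ Y ∈ A₂.parts, Z = X ×ˢ Y}) :
    SepAbelian B := by
  intro H _ _ B' φ hφ
  have hinl : ∀ X : Set G₁, MonoidHom.inl G₁ G₂ '' X = X ×ˢ {1} := fun X => by
    ext ⟨a, b⟩; simp [eq_comm]
  have hinr : ∀ Y : Set G₂, MonoidHom.inr G₁ G₂ '' Y = {1} ×ˢ Y := fun Y => by
    ext ⟨a, b⟩; simp [eq_comm, and_comm]
  have hB' : ∀ X ∈ A₁.parts, ∀ Y ∈ A₂.parts, X ×ˢ Y ∈ B.parts := fun X hX Y hY => by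
    rw [hB]; exact ⟨X, hX, Y, hY, rfl⟩
  have hι₁ : ∀ X ∈ A₁.parts, MonoidHom.inl G₁ G₂ '' X ∈ B.parts := fun X hX => by
    rw [hinl]; exact hB' X hX _ A₂.one_mem
  have hι₂ : ∀ Y ∈ A₂.parts, MonoidHom.inr G₁ G₂ '' Y ∈ B.parts := fun Y hY => by
    rw [hinr]; exact hB' _ A₁.one_mem Y hY
  obtain ⟨f₁, hf₁, hs₁⟩ := exists_map_of_sep h₁ (Prod.mk_left_injective 1) hι₁ hφ
  obtain ⟨f₂, hf₂, hs₂⟩ := exists_map_of_sep h₂ (Prod.mk_right_injective 1) hι₂ hφ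
  have hmul : ∀ X : Set G₁, ∀ Y : Set G₂,
      MonoidHom.inl G₁ G₂ '' X * MonoidHom.inr G₁ G₂ '' Y = X ×ˢ Y := fun X Y => by
    rw [hinl, hinr, Set.prod_mul_prod_comm]; simp
  have hφmul : ∀ X ∈ A₁.parts, ∀ Y ∈ A₂.parts,
      φ (MonoidHom.inl G₁ G₂ '' X) * φ (MonoidHom.inr G₁ G₂ '' Y) = φ (X ×ˢ Y) := by
    intro X hX Y hY
    ext h
    obtain ⟨Z, hZ, hh⟩ := hφ.exists_mem h
    obtain ⟨z, hz⟩ := B.nonempty_mem Z hZ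
    rw [← hφ.mem_mul_iff (hι₁ X hX) (hι₂ Y hY) hZ hz hh, hmul]
    constructor
    · intro hz'
      rwa [← B.eq_of_mem Z hZ _ (hB' X hX Y hY) z hz hz']
    · intro hh'
      rwa [← hφ.eq_of_mem hZ (hB' X hX Y hY) hh hh']
  let f : G₁ × G₂ → H := fun g => f₁ g.1 * f₂ g.2
  have hf : ∀ Z ∈ B.parts, ∀ g g', g' * g⁻¹ ∈ Z → f g' * (f g)⁻¹ ∈ φ Z := by
    intro Z hZ g g' hg
    rw [hB] at hZ
    obtain ⟨X, hX, Y, hY, rfl⟩ := hZ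
    rw [← hφmul X hX Y hY]
    have h := Set.mul_mem_mul (hf₁ X hX _ _ hg.1) (hf₂ Y hY _ _ hg.2)
    rwa [mul_mul_mul_comm, ← mul_inv] at h
  have hinj : Function.Injective f := by
    intro g g' hgg
    obtain ⟨Z, hZ, hg⟩ := B.exists_mem (g' * g⁻¹)
    have h := hf Z hZ g g' hg
    rw [hgg, mul_inv_cancel] at h
    rw [hφ.eq_of_mem hZ B.one_mem h (by simp [hφ.map_one])] at hg
    exact (mul_inv_eq_one.1 hg).symm
  have hsurj : Function.Surjective f := by
    intro h
    obtain ⟨Z, hZ, hh⟩ := hφ.exists_mem (h * (f 1)⁻¹)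
    rw [hB] at hZ
    obtain ⟨X, hX, Y, hY, rfl⟩ := hZ
    rw [← hφmul X hX Y hY] at hh
    obtain ⟨u, hu, v, hv, huv⟩ := hh
    obtain ⟨a, ha⟩ := hs₁ X hX u hu 1
    obtain ⟨b, hb⟩ := hs₂ Y hY v hv 1
    refine ⟨(a, b), ?_⟩
    have huv : u * v = h * (f 1)⁻¹ := huv
    have : f (a, b) = (u * f₁ 1) * (v * f₂ 1) := by simp [f, ha, hb]
    rw [this, mul_mul_mul_comm, huv]
    exact inv_mul_cancel_right h (f 1)
  refine ⟨f, ⟨hinj, hsurj⟩, fun Z hZ => ?_⟩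
  ext ⟨a, b⟩
  obtain ⟨g, rfl⟩ := hsurj a
  obtain ⟨g', rfl⟩ := hsurj b
  constructor
  · rintro ⟨⟨c, d⟩, ⟨x, hx, hd⟩, hcd⟩
    simp only [Prod.mk.injEq] at hcd hd
    rw [← hcd.1, ← hcd.2]
    exact ⟨_, hf Z hZ c d (by simpa [hd] using hx), by simp⟩
  · rintro ⟨x, hx, hd⟩
    have hd : f g' = x * f g := hd
    -- the basic set containing `g' * g⁻¹` has the same image as `Z`, so it is `Z`
    obtain ⟨W, hW, hg⟩ := B.exists_mem (g' * g⁻¹)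
    have h := hf W hW g g' hg
    rw [hd, mul_inv_cancel_right] at h
    rw [hφ.eq_of_mem hW hZ h hx] at hg
    exact ⟨(g, g'), ⟨_, hg, by simp⟩, rfl⟩
end
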